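/- arXiv:2507.06716 — 5 statements merged into one kernel-verified Lean document; each statement's English description precedes it below -/
import Mathlib

section
/- Ground state representation: let σ ∈ (0,1], α ∈ (0,3/2) and σ < α < 1+σ. Then for every finitely supported φ : ℕ → ℝ one has Q^σ(φ) − Σ_{n≥1} W_{α,σ}(n)·φ(n)² = (1/2)·Σ_{m,n≥1, m≠n} (−K^σ_{m,n})·I_α(m)·I_α(n)·(φ(n)/I_α(n) − φ(m)/I_α(m))². -/
open Real Filter

/-- Generalized binomial coefficient via the Gamma function. -/
noncomputable def rbinom (a b : ℝ) : ℝ :=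
  Real.Gamma (a + 1) / (Real.Gamma (b + 1) * Real.Gamma (a - b + 1))

/-- Kernel of the fractional Laplacian `(-Δ_ℕ)^σ` on the discrete half-line. -/
noncomputable def Kker (σ : ℝ) (m n : ℕ) : ℝ :=
  (-1 : ℝ) ^ (m + n) *
    (rbinom (2 * σ) (σ + m - n) - rbinom (2 * σ) (σ + m + n))

/-- Quadratic form of `(-Δ_ℕ)^σ` (used for finitely supported `f` with `f 0 = 0`). -/
noncomputable def Qform (σ : ℝ) (f : ℕ → ℝ) : ℝ :=
  ∑' m : ℕ, ∑' n : ℕ, Kker σ m n * f m * f n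

/-- The Hardy-weight `W_{α,σ}`. -/
noncomputable def Wweight (σ α : ℝ) (n : ℕ) : ℝ :=
  4 ^ σ * (Real.Gamma (3/2 - α + σ) * Real.Gamma α /
            (Real.Gamma (α - σ) * Real.Gamma (3/2 - α))) *
    (Real.Gamma (n + α - σ - 1) * Real.Gamma (n - α + 2) /
      (Real.Gamma (n - α + σ + 2) * Real.Gamma (n + α - 1)))

/-- The Riesz potential `I_α`. -/
noncomputable def Riesz (α : ℝ) (n : ℕ) : ℝ :=
  (4 * n / (4 ^ α * Real.sqrt 2)) * Real.Gamma (3/2 - α) *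
    Real.Gamma (n + α - 1) / (Real.Gamma α * Real.Gamma (n - α + 2))

namespace GS

lemma hs_congr {ι : Type*} {f g : ι → ℝ} {a : ℝ} (h : ∀ i, f i = g i) :
    HasSum f a ↔ HasSum g a := by
  rw [show f = g from funext h]

/-- Rising factorial. -/
noncomputable def P (x : ℝ) (k : ℕ) : ℝ := ∏ i ∈ Finset.range k, (x + i)

lemma P_zero (x : ℝ) : P x 0 = 1 := by simp [P]

lemma P_succ (x : ℝ) (k : ℕ) : P x (k+1) = P x k * (x + k) := by
  simp [P, Finset.prod_range_succ]

lemma P_succ' (x : ℝ) (k : ℕ) : P (x-1) (k+1) = (x-1) * P x k := by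
  simp only [P, Finset.prod_range_succ', Nat.cast_zero, add_zero]
  rw [mul_comm]; congr 1
  refine Finset.prod_congr rfl fun i _ => ?_
  push_cast; ring

lemma P_pos {x : ℝ} (hx : 0 < x) (k : ℕ) : 0 < P x k :=
  Finset.prod_pos fun i _ => by positivity

lemma Gamma_P {x : ℝ} (hx : 0 < x) (k : ℕ) : Gamma (x + k) = Gamma x * P x k := by
  induction k with
  | zero => simp [P_zero]
  | succ k ih =>
    rw [P_succ, ← mul_assoc, ← ih]
    have : x + (k:ℝ) ≠ 0 := by positivity
    push_cast
    rw [← add_assoc, Real.Gamma_add_one this]; ring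

/-- ratio of rising factorials -/
noncomputable def q (b : ℝ) (k : ℕ) : ℝ := P b k / P (3 - b) k

lemma q_zero (b : ℝ) : q b 0 = 1 := by simp [q, P_zero]

lemma q_succ (b : ℝ) (k : ℕ) : q b (k+1) = q b k * ((b + k) / (3 - b + k)) := by
  simp only [q, P_succ]; rw [mul_div_mul_comm]

lemma q_abs_le {d : ℝ} (hd : d ≤ 3/2) (k : ℕ) : |q d k| ≤ 1 := by
  induction k with
  | zero => simp [q_zero]
  | succ k ih =>
    rw [q_succ, abs_mul]
    have h0 : (0:ℝ) ≤ k := Nat.cast_nonneg k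
    have h1 : |(d + k) / (3 - d + k)| ≤ 1 := by
      rw [abs_div, abs_of_pos (show 0 < 3 - d + k by linarith)]
      rw [div_le_one (by linarith), abs_le]
      constructor <;> linarith
    exact mul_le_one₀ ih (abs_nonneg _) h1

lemma rpow_cmp {x y c p : ℝ} (hx : 0 < x) (hy : 0 < y) (hc : 1 ≤ c) (h1 : x ≤ c * y)
    (h2 : y ≤ c * x) : x ^ p ≤ c ^ |p| * y ^ p := by
  have hc0 : 0 < c := by linarith
  rcases le_total 0 p with hp | hp
  · rw [abs_of_nonneg hp, ← Real.mul_rpow hc0.le hy.le]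
    exact Real.rpow_le_rpow hx.le h1 hp
  · rw [abs_of_nonpos hp]
    have h3 : y ^ (-p) ≤ c ^ (-p) * x ^ (-p) := by
      rw [← Real.mul_rpow hc0.le hx.le]
      exact Real.rpow_le_rpow hy.le h2 (by linarith)
    have e1 : x ^ p * x ^ (-p) = 1 := by rw [← Real.rpow_add hx]; simp
    have e2 : y ^ p * y ^ (-p) = 1 := by rw [← Real.rpow_add hy]; simp
    have hxp := Real.rpow_pos_of_pos hx p
    have hyp := Real.rpow_pos_of_pos hy p
    calc x ^ p = x ^ p * y ^ p * y ^ (-p) := by rw [mul_assoc, e2, mul_one]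
      _ ≤ x ^ p * y ^ p * (c ^ (-p) * x ^ (-p)) := by gcongr
      _ = c ^ (-p) * y ^ p * (x ^ p * x ^ (-p)) := by ring
      _ = _ := by rw [e1, mul_one]

lemma GammaSeq_inv_isBigO (s : ℝ) :
    (fun n : ℕ => (Real.GammaSeq s n)⁻¹) =O[atTop] (fun _ => (1:ℝ)) := by
  by_cases h : Real.Gamma s = 0
  · obtain ⟨m, hm⟩ := (Real.Gamma_eq_zero_iff s).1 h
    have : ∀ᶠ n : ℕ in atTop, (Real.GammaSeq s n)⁻¹ = 0 := by
      filter_upwards [eventually_ge_atTop m] with n hn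
      rw [Real.GammaSeq]
      have : ∏ j ∈ Finset.range (n + 1), (s + (j:ℝ)) = 0 :=
        Finset.prod_eq_zero (i := m) (by simp; omega) (by simp [hm])
      simp [this]
    exact (Asymptotics.isBigO_zero (fun _ : ℕ => (1:ℝ)) atTop).congr'
      (this.mono fun n hn => hn.symm) (Eventually.of_forall fun _ => rfl)
  · exact ((Real.GammaSeq_tendsto_Gamma s).inv₀ h).isBigO_one ℝ

lemma q_bound (b : ℝ) (_hb : b < 3) :
    ∃ C, 0 ≤ C ∧ ∀ k : ℕ, |q b k| ≤ C * ((k:ℝ) + 1) ^ (2 * b - 3) := by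
  have h1 : (fun n : ℕ => (Real.GammaSeq b n)⁻¹ * Real.GammaSeq (3 - b) n)
      =O[atTop] (fun _ => (1:ℝ)) := by
    simpa using (GammaSeq_inv_isBigO b).mul
      ((Real.GammaSeq_tendsto_Gamma (3-b)).isBigO_one ℝ)
  obtain ⟨C, hC0, hC⟩ := Asymptotics.bound_of_isBigO_nat_atTop h1
  have key : ∀ k : ℕ, 2 ≤ k → |q b k| ≤ C * 2 ^ |2*b-3| * ((k:ℝ)+1) ^ (2*b-3) * 2 ^ |2*b-3| := by
    intro k hk
    obtain ⟨n, rfl⟩ : ∃ n, k = n + 1 := ⟨k - 1, by omega⟩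
    have hn : 1 ≤ n := by omega
    have hn' : (1:ℝ) ≤ n := by exact_mod_cast hn
    have hn0 : (0:ℝ) < n := by linarith
    have hh := hC (x := n) (by simp)
    have e : (Real.GammaSeq b n)⁻¹ * Real.GammaSeq (3 - b) n = q b (n+1) / (n:ℝ) ^ (2*b-3) := by
      rw [Real.GammaSeq, Real.GammaSeq, q, P, P]
      have : (n:ℝ) ^ (2*b-3) = (n:ℝ) ^ b / (n:ℝ) ^ (3-b) := by
        rw [← Real.rpow_sub hn0]; ring_nf
      rw [this]
      have a1 := (Real.rpow_pos_of_pos hn0 b).ne'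
      have a2 := (Real.rpow_pos_of_pos hn0 (3-b)).ne'
      have a3 : (n.factorial : ℝ) ≠ 0 := by positivity
      rw [inv_div]
      field_simp
    rw [e] at hh
    have hp := Real.rpow_pos_of_pos hn0 (2*b-3)
    simp only [norm_div, Real.norm_eq_abs, norm_one, mul_one, abs_of_pos hp] at hh
    rw [div_le_iff₀ hp] at hh
    have c1 : (n:ℝ) ^ (2*b-3) ≤ 2 ^ |2*b-3| * ((n:ℝ)+1) ^ (2*b-3) :=
      rpow_cmp hn0 (by linarith) (by norm_num) (by linarith) (by linarith)
    have c2 : ((n:ℝ)+1) ^ (2*b-3) ≤ 2 ^ |2*b-3| * ((n:ℝ)+1+1) ^ (2*b-3) :=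
      rpow_cmp (by linarith) (by linarith) (by norm_num) (by linarith) (by linarith)
    push_cast
    have hT : (0:ℝ) ≤ 2 ^ |2*b-3| := by positivity
    calc |q b (n+1)| ≤ C * (n:ℝ) ^ (2*b-3) := hh
      _ ≤ C * (2 ^ |2*b-3| * (2 ^ |2*b-3| * ((n:ℝ)+1+1) ^ (2*b-3))) := by
          gcongr
          exact c1.trans (by gcongr)
      _ = _ := by ring
  set M := |q b 0| + |q b 1| / 2 ^ (2*b-3) + C * 2 ^ |2*b-3| * 2 ^ |2*b-3| with hM
  have x0 : 0 ≤ |q b 0| := abs_nonneg _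
  have x1 : 0 ≤ |q b 1| / 2 ^ (2*b-3) := by positivity
  have x2 : 0 ≤ C * 2 ^ |2*b-3| * 2 ^ |2*b-3| := by positivity
  refine ⟨M, by linarith, fun k => ?_⟩
  match k with
  | 0 => simp only [Nat.cast_zero, zero_add, Real.one_rpow, mul_one]; linarith
  | 1 =>
    have hp : (0:ℝ) < 2 ^ (2*b-3) := by positivity
    have : |q b 1| / 2 ^ (2*b-3) ≤ M := by linarith
    rw [div_le_iff₀ hp] at this
    norm_num; exact this
  | (n+2) =>
    refine (key (n+2) (by omega)).trans ?_
    have hp : (0:ℝ) ≤ (((n+2:ℕ):ℝ)+1) ^ (2*b-3) := by positivity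
    calc _ = (C * 2 ^ |2*b-3| * 2 ^ |2*b-3|) * (((n+2:ℕ):ℝ)+1) ^ (2*b-3) := by ring
      _ ≤ _ := by gcongr; linarith

lemma summable_rp {p : ℝ} (hp : p < -1) : Summable (fun n : ℕ => ((n:ℝ)+1) ^ p) := by
  have := (summable_nat_add_iff 1).2 (Real.summable_nat_rpow.2 hp)
  simpa using this

/-- tendsto for Gamma ratio -/
lemma Gamma_asym {x : ℝ} (hx : 0 < x) :
    Tendsto (fun N : ℕ => Real.Gamma (x + (N+1:ℕ)) / ((N:ℝ) ^ x * N.factorial)) atTop (nhds 1) := by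
  have h := (Real.GammaSeq_tendsto_Gamma x).inv₀ (Real.Gamma_pos_of_pos hx).ne'
  have h2 := h.const_mul (Real.Gamma x)
  rw [mul_inv_cancel₀ (Real.Gamma_pos_of_pos hx).ne'] at h2
  refine h2.congr fun N => ?_
  rw [Gamma_P hx, Real.GammaSeq, inv_div, P]
  ring

lemma D_tendsto {x y z w : ℝ} (hx : 0 < x) (hy : 0 < y) (hz : 0 < z) (hw : 0 < w)
    (h : x + y = z + w) :
    Tendsto (fun N : ℕ => Real.Gamma (x + N) * Real.Gamma (y + N) /
      (Real.Gamma (z + N) * Real.Gamma (w + N))) atTop (nhds 1) := by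
  rw [← tendsto_add_atTop_iff_nat 1]
  have := ((Gamma_asym hx).mul (Gamma_asym hy)).div ((Gamma_asym hz).mul (Gamma_asym hw)) (by simp)
  simp only [mul_one, div_one] at this
  refine this.congr' ?_
  filter_upwards [eventually_ge_atTop 1] with N hN
  have hN0 : (0:ℝ) < N := by exact_mod_cast hN
  have e : (N:ℝ)^x * (N:ℝ)^y = (N:ℝ)^z * (N:ℝ)^w := by
    rw [← Real.rpow_add hN0, ← Real.rpow_add hN0, h]
  simp only [Pi.div_apply]
  have g : ∀ x : ℝ, (N:ℝ)^x ≠ 0 := fun x => (Real.rpow_pos_of_pos hN0 x).ne'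
  have a3 : (N.factorial : ℝ) ≠ 0 := by positivity
  have gz := (Real.Gamma_pos_of_pos (show 0 < z + (N+1:ℕ) by positivity)).ne'
  have gw := (Real.Gamma_pos_of_pos (show 0 < w + (N+1:ℕ) by positivity)).ne'
  rw [div_mul_div_comm, div_mul_div_comm, div_div_div_eq]
  have e1 : (N:ℝ)^x * N.factorial * ((N:ℝ)^y * N.factorial) =
    (N:ℝ)^z * N.factorial * ((N:ℝ)^w * N.factorial) := by
    linear_combination (N.factorial:ℝ)^2 * e
  rw [e1]
  have := g z
  have := g w
  field_simp

/-- summand of the well-poised series -/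
noncomputable def t (b c d : ℝ) (k : ℕ) : ℝ := ((k:ℝ)+1)^2 * q b k * q c k * q d k

noncomputable def H (b c d : ℝ) (k : ℕ) : ℝ :=
  (3-d)/2 * (k+1) * (k+2) * (b+k) * (c+k) / (3-d+k) * (q b k * q c k) * q d k

lemma q_shift {d : ℝ} (hd : d ≤ 3/2) (k : ℕ) :
    q (d-1) (k+1) * ((3-d+k) * (4-d+k)) = (d-1) * (3-d) * q d k := by
  have h0 : (0:ℝ) ≤ k := Nat.cast_nonneg k
  have p1 := (P_pos (show 0 < 3 - d by linarith) k).ne'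
  have p2 := (P_pos (show 0 < 4 - d by linarith) (k+1)).ne'
  have e1 : P (3-d) (k+2) = (3-d) * P (4-d) (k+1) := by
    have := P_succ' (4-d) (k+1)
    rw [show 4 - d - 1 = 3 - d by ring] at this; exact this
  rw [P_succ, P_succ] at e1
  unfold q
  rw [P_succ', show 3 - (d-1) = 4 - d by ring]
  rw [div_mul_eq_mul_div, mul_div_assoc', div_eq_div_iff p2 p1]
  push_cast at e1
  linear_combination (d-1) * P d k * e1

lemma partial_sum {b c d : ℝ} (hb : b < 3) (hc : c < 3) (hd : d ≤ 3/2) (n : ℕ) :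
    ∑ k ∈ Finset.range (n+1), ((3-b-d)*(3-c-d) * t b c (d-1) k - (3-d)*(3-b-c-d) * t b c d k)
      = H b c d n := by
  induction n with
  | zero =>
    have : 3 - d ≠ 0 := by linarith
    simp [t, H, q_zero]; field_simp; ring
  | succ n ih =>
    rw [Finset.sum_range_succ, ih]
    have h0 : (0:ℝ) ≤ n := Nat.cast_nonneg n
    have n1 : 3 - d + n ≠ 0 := by linarith
    have n2 : 4 - d + n ≠ 0 := by linarith
    have n3 : 3 - b + n ≠ 0 := by linarith
    have n4 : 3 - c + n ≠ 0 := by linarith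
    have n5 : 3 - d + (n + 1) ≠ 0 := by linarith
    have hq : q (d-1) (n+1) = (d-1) * (3-d) * q d n / ((3-d+n) * (4-d+n)) := by
      rw [eq_div_iff (mul_ne_zero n1 n2), q_shift hd]
    simp only [t, H, hq]
    rw [q_succ b, q_succ c, q_succ d]
    push_cast
    field_simp
    ring

end GS
namespace GS

lemma qq_bound {b c : ℝ} (hb : b < 3/2) (hc : c < 3/2) :
    ∃ C, 0 ≤ C ∧ ∀ k : ℕ, |q b k * q c k| ≤ C * ((k:ℝ) + 1) ^ (2 * (b+c) - 6) := by
  obtain ⟨B, hB0, hB⟩ := q_bound b (by linarith)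
  obtain ⟨C, hC0, hC⟩ := q_bound c (by linarith)
  refine ⟨B * C, by positivity, fun k => ?_⟩
  have hk : (0:ℝ) < (k:ℝ) + 1 := by positivity
  rw [abs_mul, show 2 * (b+c) - 6 = (2*b-3) + (2*c-3) by ring, Real.rpow_add hk]
  calc |q b k| * |q c k| ≤ (B * ((k:ℝ)+1)^(2*b-3)) * (C * ((k:ℝ)+1)^(2*c-3)) :=
        mul_le_mul (hB k) (hC k) (abs_nonneg _) (by positivity)
    _ = _ := by ring

lemma t_dom {b c : ℝ} (hb : b < 3/2) (hc : c < 3/2) (hbc : b + c < 3/2) :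
    ∃ g : ℕ → ℝ, Summable g ∧ ∀ d ≤ 3/2, ∀ k, |t b c d k| ≤ g k := by
  obtain ⟨C, hC0, hC⟩ := qq_bound hb hc
  refine ⟨fun k => C * ((k:ℝ)+1)^(2*(b+c)-4), (summable_rp (by linarith)).mul_left C, ?_⟩
  intro d hd k
  show _ ≤ C * ((k:ℝ)+1)^(2*(b+c)-4)
  have hk : (0:ℝ) < (k:ℝ) + 1 := by positivity
  have e : ((k:ℝ)+1)^(2*(b+c)-4) = ((k:ℝ)+1)^2 * ((k:ℝ)+1)^(2*(b+c)-6) := by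
    rw [← Real.rpow_natCast, ← Real.rpow_add hk]; congr 1; push_cast; ring
  rw [t, mul_assoc (((k:ℝ)+1)^2), abs_mul, abs_mul, abs_of_pos (show 0 < ((k:ℝ)+1)^2 by positivity), e]
  calc ((k:ℝ)+1)^2 * |q b k * q c k| * |q d k|
      ≤ ((k:ℝ)+1)^2 * (C * ((k:ℝ)+1)^(2*(b+c)-6)) * 1 := by
        gcongr
        · exact hC k
        · exact q_abs_le hd k
    _ = _ := by ring

lemma t_summable {b c d : ℝ} (hb : b < 3/2) (hc : c < 3/2) (hbc : b + c < 3/2) (hd : d ≤ 3/2) :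
    Summable (t b c d) := by
  obtain ⟨g, hg, h⟩ := t_dom hb hc hbc
  exact Summable.of_norm_bounded hg (fun k => h d hd k)

lemma H_tendsto {b c d : ℝ} (hb : b < 3/2) (hc : c < 3/2) (hbc : b + c < 3/2) (hd : d ≤ 3/2) :
    Tendsto (H b c d) atTop (nhds 0) := by
  obtain ⟨C, hC0, hC⟩ := qq_bound hb hc
  have hlim : Tendsto (fun k : ℕ => ((3-d) * (|b|+1) * (|c|+1) * C) *
      ((k:ℝ)+1)^(-(3 - 2*(b+c)))) atTop (nhds 0) := by
    have h1 : Tendsto (fun k : ℕ => (k:ℝ)+1) atTop atTop :=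
      tendsto_atTop_add_const_right _ _ tendsto_natCast_atTop_atTop
    have := ((tendsto_rpow_neg_atTop (show 0 < 3 - 2*(b+c) by linarith)).comp h1).const_mul
      ((3-d) * (|b|+1) * (|c|+1) * C)
    simpa using this
  refine squeeze_zero_norm (fun k => ?_) hlim
  have hk0 : (0:ℝ) ≤ k := Nat.cast_nonneg k
  have hk : (0:ℝ) < (k:ℝ) + 1 := by positivity
  have e : ((k:ℝ)+1)^(-(3 - 2*(b+c))) = ((k:ℝ)+1)^3 * ((k:ℝ)+1)^(2*(b+c)-6) := by
    rw [← Real.rpow_natCast, ← Real.rpow_add hk]; congr 1; push_cast; ring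
  have hx : ∀ x : ℝ, |x + k| ≤ (|x|+1) * ((k:ℝ)+1) := fun x => by
    calc |x + k| ≤ |x| + |(k:ℝ)| := abs_add_le _ _
      _ = |x| + k := by rw [abs_of_nonneg hk0]
      _ ≤ _ := by nlinarith [abs_nonneg x]
  rw [Real.norm_eq_abs, H, e]
  have d1 : 0 < 3 - d := by linarith
  rw [abs_mul, abs_mul, abs_div, abs_mul, abs_mul, abs_mul, abs_mul, abs_of_pos hk,
    abs_of_pos (show 0 < (3-d)/2 by linarith), abs_of_pos (show 0 < (k:ℝ)+2 by linarith),
    abs_of_pos (show 0 < 3-d+k by linarith)]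
  calc (3-d)/2 * (k+1) * (k+2) * |b+k| * |c+k| / (3-d+k) * |q b k * q c k| * |q d k|
      ≤ (3-d)/2 * (k+1) * (2*(k+1)) * ((|b|+1) * ((k:ℝ)+1)) * ((|c|+1) * ((k:ℝ)+1)) / (1+k) *
        (C * ((k:ℝ)+1)^(2*(b+c)-6)) * 1 := by
        gcongr
        · linarith
        · exact hx b
        · exact hx c
        · linarith
        · exact hC k
        · exact q_abs_le hd k
    _ = _ := by rw [add_comm 1 (k:ℝ)]; field_simp

noncomputable def F (b c d : ℝ) : ℝ := ∑' k, t b c d k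

lemma F_rec {b c d : ℝ} (hb : b < 3/2) (hc : c < 3/2) (hbc : b + c < 3/2) (hd : d ≤ 3/2) :
    (3-b-d)*(3-c-d) * F b c (d-1) = (3-d)*(3-b-c-d) * F b c d := by
  have s1 := (t_summable hb hc hbc (show d - 1 ≤ 3/2 by linarith)).hasSum.mul_left ((3-b-d)*(3-c-d))
  have s2 := (t_summable hb hc hbc hd).hasSum.mul_left ((3-d)*(3-b-c-d))
  have h := ((tendsto_add_atTop_iff_nat 1).2 (s1.sub s2).tendsto_sum_nat)
  have h' : Tendsto (H b c d) atTop (nhds _) :=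
    h.congr (fun n => partial_sum (by linarith) (by linarith) hd n)
  have := tendsto_nhds_unique h' (H_tendsto hb hc hbc hd)
  simp only [F]; linarith

noncomputable def D (b c d : ℝ) : ℝ :=
  Gamma (3-d) * Gamma (3-b-c-d) / (Gamma (3-b-d) * Gamma (3-c-d))

lemma D_rec {b c d : ℝ} (hb : b < 3/2) (hc : c < 3/2) (hbc : b + c < 3/2) (hd : d ≤ 3/2) :
    (3-b-d)*(3-c-d) * D b c (d-1) = (3-d)*(3-b-c-d) * D b c d := by
  have g : ∀ x : ℝ, 0 < x → Gamma (x + 1) = x * Gamma x := fun x hx => Real.Gamma_add_one hx.ne'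
  have h1 : 0 < 3 - d := by linarith
  have h2 : 0 < 3-b-c-d := by linarith
  have h3 : 0 < 3-b-d := by linarith
  have h4 : 0 < 3-c-d := by linarith
  rw [D, show 3 - (d-1) = 3 - d + 1 by ring, show 3-b-c-(d-1) = 3-b-c-d+1 by ring,
    show 3-b-(d-1) = 3-b-d+1 by ring, show 3-c-(d-1) = 3-c-d+1 by ring, g _ h1, g _ h2, g _ h3,
    g _ h4, D]
  have := (Gamma_pos_of_pos h3).ne'
  have := (Gamma_pos_of_pos h4).ne'
  field_simp

lemma D_pos {b c d : ℝ} (hb : b < 3/2) (hc : c < 3/2) (hbc : b + c < 3/2) (hd : d ≤ 3/2) :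
    0 < D b c d := by
  have h1 := Gamma_pos_of_pos (show 0 < 3 - d by linarith)
  have h2 := Gamma_pos_of_pos (show 0 < 3-b-c-d by linarith)
  have h3 := Gamma_pos_of_pos (show 0 < 3-b-d by linarith)
  have h4 := Gamma_pos_of_pos (show 0 < 3-c-d by linarith)
  unfold D; positivity

lemma FD_const {b c d : ℝ} (hb : b < 3/2) (hc : c < 3/2) (hbc : b + c < 3/2) (hd : d ≤ 3/2)
    (N : ℕ) : F b c (d - N) * D b c d = F b c d * D b c (d - N) := by
  induction N with
  | zero => simp
  | succ N ih =>
    have hN : (0:ℝ) ≤ N := Nat.cast_nonneg N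
    have hd' : d - N ≤ 3/2 := by linarith
    have r1 := F_rec hb hc hbc hd'
    have r2 := D_rec hb hc hbc hd'
    have h3 : 0 < 3-b-(d-N) := by linarith
    have h4 : 0 < 3-c-(d-N) := by linarith
    have e : d - ((N+1:ℕ):ℝ) = d - N - 1 := by push_cast; ring
    rw [e]
    apply mul_left_cancel₀ (mul_pos h3 h4).ne'
    linear_combination D b c d * r1 - F b c d * r2 + (3-(d-N))*(3-b-c-(d-N)) * ih

lemma q_lim (d : ℝ) (k : ℕ) : Tendsto (fun N : ℕ => q (d - N) k) atTop (nhds ((-1)^k)) := by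
  induction k with
  | zero => simp [q_zero]
  | succ k ih =>
    simp only [q_succ, pow_succ]
    refine ih.mul ?_
    have h1 : Tendsto (fun N : ℕ => (3 + 2 * (k:ℝ)) / ((N:ℝ) + (3 - d + k)) - 1) atTop (nhds (0 - 1)) := by
      refine Tendsto.sub_const ?_ 1
      refine Tendsto.const_div_atTop ?_ _
      exact tendsto_atTop_add_const_right _ _ tendsto_natCast_atTop_atTop
    rw [zero_sub] at h1
    refine h1.congr' ?_
    have h2 : ∀ᶠ N : ℕ in atTop, 0 < (N:ℝ) + (3 - d + k) :=
      (tendsto_atTop_add_const_right _ _ tendsto_natCast_atTop_atTop).eventually_gt_atTop 0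
    filter_upwards [h2] with N hN
    have e : 3 - (d - N) + k = (N:ℝ) + (3 - d + k) := by ring
    rw [e, eq_div_iff hN.ne', sub_mul, div_mul_cancel₀ _ hN.ne']
    ring

lemma F_lim {b c d : ℝ} (hb : b < 3/2) (hc : c < 3/2) (hbc : b + c < 3/2) (hd : d ≤ 3/2) :
    Tendsto (fun N : ℕ => F b c (d - N)) atTop
      (nhds (∑' k : ℕ, ((k:ℝ)+1)^2 * q b k * q c k * (-1)^k)) := by
  obtain ⟨g, hg, h⟩ := t_dom hb hc hbc
  refine tendsto_tsum_of_dominated_convergence hg (fun k => ?_) (Eventually.of_forall fun N k => ?_)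
  · exact (q_lim d k).const_mul _
  · have hN : (0:ℝ) ≤ N := Nat.cast_nonneg N
    exact h _ (by linarith) k

lemma D_lim {b c d : ℝ} (hb : b < 3/2) (hc : c < 3/2) (hbc : b + c < 3/2) (hd : d ≤ 3/2) :
    Tendsto (fun N : ℕ => D b c (d - N)) atTop (nhds 1) := by
  refine (D_tendsto (show 0 < 3 - d by linarith) (show 0 < 3-b-c-d by linarith)
    (show 0 < 3-b-d by linarith) (show 0 < 3-c-d by linarith) (by ring)).congr fun N => ?_
  simp only [D, sub_add, sub_sub_eq_add_sub]

lemma F_inf {b c d : ℝ} (hb : b < 3/2) (hc : c < 3/2) (hbc : b + c < 3/2) (hd : d ≤ 3/2) :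
    (∑' k : ℕ, ((k:ℝ)+1)^2 * q b k * q c k * (-1)^k) * D b c d = F b c d := by
  have h1 := (F_lim hb hc hbc hd).mul_const (D b c d)
  have h2 := (D_lim hb hc hbc hd).const_mul (F b c d)
  rw [mul_one] at h2
  exact tendsto_nhds_unique h1 (h2.congr fun N => (FD_const hb hc hbc hd N).symm)

lemma F_zero (b c : ℝ) : F b c 0 = 1 := by
  rw [F, tsum_eq_single 0]
  · simp [t, q_zero]
  · intro k hk
    have : P 0 k = 0 := Finset.prod_eq_zero (i := 0) (by simp; omega) (by simp)
    simp [t, q, this]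

lemma F_eval {b c : ℝ} (hb : b < 3/2) (hc : c < 3/2) (hbc : b + c < 3/2) :
    F b c (3/2) * D b c 0 = D b c (3/2) := by
  have h1 := F_inf hb hc hbc (show (0:ℝ) ≤ 3/2 by norm_num)
  have h2 := F_inf hb hc hbc (le_refl (3/2:ℝ))
  rw [F_zero] at h1
  rw [← h2]
  linear_combination D b c (3/2) * h1

lemma q_half (k : ℕ) : q (3/2) k = 1 := by
  rw [q, show (3:ℝ) - 3/2 = 3/2 by norm_num, div_self (P_pos (by norm_num) k).ne']

end GS
namespace GS

noncomputable def kf (σ x : ℝ) : ℝ := rbinom (2*σ) (σ + x)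

lemma kf_neg (σ x : ℝ) : kf σ (-x) = kf σ x := by
  simp only [kf, rbinom]
  rw [mul_comm (Gamma (σ + -x + 1))]
  congr 3 <;> ring

lemma kf_succ {σ x : ℝ} (h : 0 < σ + x + 1) : kf σ (x+1) = kf σ x * ((σ - x) / (σ + 1 + x)) := by
  simp only [kf, rbinom]
  rw [show 2*σ - (σ + (x+1)) + 1 = σ - x by ring, show 2*σ - (σ+x) + 1 = (σ - x) + 1 by ring,
    show σ + (x+1) + 1 = (σ + x + 1) + 1 by ring, Real.Gamma_add_one h.ne',
    show σ + 1 + x = σ + x + 1 by ring]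
  have hg := (Gamma_pos_of_pos h).ne'
  by_cases h0 : σ - x = 0
  · simp [h0, Real.Gamma_zero]
  · rw [Real.Gamma_add_one h0]
    by_cases h1 : Gamma (σ - x) = 0
    · simp [h1]
    · field_simp

lemma kf_nat {σ : ℝ} (hσ : 0 < σ) (k : ℕ) :
    kf σ k = (-1)^k * kf σ 0 * (P (-σ) k / P (σ+1) k) := by
  induction k with
  | zero => simp [P_zero]
  | succ k ih =>
    push_cast
    rw [kf_succ (by positivity), ih, P_succ, P_succ]
    have := (P_pos (show 0 < σ + 1 by linarith) k).ne'
    have : σ + 1 + k ≠ 0 := by positivity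
    field_simp
    ring

lemma K_eq (σ : ℝ) (m n : ℕ) :
    Kker σ m n = (-1)^(m+n) * (kf σ (m - n) - kf σ (m + n)) := by
  simp only [Kker, kf]; ring_nf

lemma K_zero_right (σ : ℝ) (m : ℕ) : Kker σ m 0 = 0 := by simp [K_eq]

lemma K_zero_left (σ : ℝ) (n : ℕ) : Kker σ 0 n = 0 := by simp [K_eq, kf_neg]

lemma K_symm (σ : ℝ) (m n : ℕ) : Kker σ m n = Kker σ n m := by
  rw [K_eq, K_eq, add_comm m n, add_comm (m:ℝ) n, ← kf_neg σ (m - n), neg_sub]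

lemma K_comm (σ : ℝ) (m n : ℕ) :
    Kker σ (m+2) (n+1) = Kker σ (m+1) (n+2) + Kker σ (m+1) n - Kker σ m (n+1) := by
  simp only [K_eq]
  push_cast
  rw [show (m:ℝ) + 2 - (n+1) = m + 1 - n by ring, show (m:ℝ) + 1 - (n+2) = m - (n+1) by ring,
    show (m:ℝ) + 2 + (n+1) = m + 1 + (n+2) by ring, show (m:ℝ) + (n+1) = m + 1 + n by ring]
  ring

lemma K_one {σ : ℝ} (hσ : 0 < σ) (n : ℕ) :
    Kker σ 1 (n+1) = kf σ 0 * (2 * (2*σ+1) / ((σ+1)*(σ+2))) * ((n+1) * q (-σ) n) := by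
  rw [K_eq]
  push_cast
  rw [show (1:ℝ) - (n+1) = -(n:ℝ) by ring, kf_neg, show (1:ℝ) + (n+1) = ((n+2:ℕ):ℝ) by push_cast; ring,
    kf_nat hσ, kf_nat hσ, q, show 3 - -σ = σ + 3 by ring]
  have e1 : P (σ+1) (n+2) = (σ+1) * (σ+2) * P (σ+3) n := by
    have a := P_succ' (σ+2) (n+1)
    have b := P_succ' (σ+3) n
    rw [show σ + 2 - 1 = σ + 1 by ring] at a
    rw [show σ + 3 - 1 = σ + 2 by ring] at b
    rw [a, b]; ring
  have e2 : P (σ+1) (n+2) = P (σ+1) n * (σ+1+n) * (σ+2+n) := by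
    rw [P_succ, P_succ]; push_cast; ring
  have e3 : P (-σ) (n+2) = P (-σ) n * (-σ+n) * (-σ+1+n) := by
    rw [P_succ, P_succ]; push_cast; ring
  have p1 := (P_pos (show 0 < σ + 1 by linarith) n).ne'
  have p3 := (P_pos (show 0 < σ + 3 by linarith) n).ne'
  have n1 : σ + 1 + n ≠ 0 := by positivity
  have n2 : σ + 2 + n ≠ 0 := by positivity
  have n3 : σ + 1 ≠ 0 := by positivity
  have n4 : σ + 2 ≠ 0 := by positivity
  have e4 : P (σ+3) n = P (σ+1) n * (σ+1+n) * (σ+2+n) / ((σ+1)*(σ+2)) := by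
    rw [eq_div_iff (mul_ne_zero n3 n4), ← e2, e1]; ring
  have hs : ((-1:ℝ))^n * (-1)^n = 1 := by rw [← mul_pow]; simp
  rw [e3, e2, e4, pow_add (-1:ℝ) 1 (n+1), pow_add (-1:ℝ) n 1, pow_add (-1:ℝ) n 2]
  have : ∀ A B : ℝ, (-1:ℝ)^1 * ((-1)^n * (-1)^1) * ((-1)^n * kf σ 0 * A - (-1)^n * (-1)^2 * kf σ 0 * B)
      = kf σ 0 * (A - B) := by
    intro A B; linear_combination (kf σ 0 * (A - B)) * hs
  rw [this]
  field_simp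
  ring

lemma shift_cmp (p : ℝ) (n : ℕ) : ((n:ℝ)+2)^p ≤ 2 ^ |p| * ((n:ℝ)+1)^p ∧
    ((n:ℝ)+1)^p ≤ 2 ^ |p| * ((n:ℝ)+2)^p := by
  have h0 : (0:ℝ) ≤ n := Nat.cast_nonneg n
  constructor <;> refine rpow_cmp ?_ ?_ (by norm_num) ?_ ?_ <;> linarith

/-- a generic polynomial bound -/
def Bd (p : ℝ) (f : ℕ → ℝ) : Prop := ∃ C, 0 ≤ C ∧ ∀ n : ℕ, |f n| ≤ C * ((n:ℝ)+1)^p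

lemma Bd.add {p : ℝ} {f g : ℕ → ℝ} (hf : Bd p f) (hg : Bd p g) : Bd p (fun n => f n + g n) := by
  obtain ⟨A, hA0, hA⟩ := hf
  obtain ⟨B, hB0, hB⟩ := hg
  refine ⟨A + B, by positivity, fun n => (abs_add_le _ _).trans ?_⟩
  rw [add_mul]; exact add_le_add (hA n) (hB n)

lemma Bd.smul {p : ℝ} {f : ℕ → ℝ} (hf : Bd p f) (c : ℝ) : Bd p (fun n => c * f n) := by
  obtain ⟨A, hA0, hA⟩ := hf
  refine ⟨|c| * A, by positivity, fun n => ?_⟩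
  rw [abs_mul, mul_assoc]; gcongr; exact hA n

lemma Bd.shift {p : ℝ} {f : ℕ → ℝ} (hf : Bd p f) : Bd p (fun n => f (n+1)) := by
  obtain ⟨A, hA0, hA⟩ := hf
  refine ⟨A * 2 ^ |p|, by positivity, fun n => (hA (n+1)).trans ?_⟩
  rw [mul_assoc]; gcongr
  have := (shift_cmp p n).1
  push_cast; rwa [show (n:ℝ) + 1 + 1 = n + 2 by ring]

lemma Bd.unshift {p : ℝ} {f : ℕ → ℝ} (hf : Bd p (fun n => f (n+1))) : Bd p f := by
  obtain ⟨A, hA0, hA⟩ := hf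
  have hc : (0:ℝ) ≤ 2 ^ |p| := by positivity
  refine ⟨A * 2 ^ |p| + |f 0|, by positivity, fun n => ?_⟩
  cases n with
  | zero => simp; positivity
  | succ n =>
    refine (hA n).trans ?_
    have h2 := (shift_cmp p n).2
    push_cast; rw [show (n:ℝ) + 1 + 1 = n + 2 by ring]
    have : (0:ℝ) ≤ |f 0| * ((n:ℝ)+2)^p := by positivity
    calc A * ((n:ℝ)+1)^p ≤ A * (2 ^ |p| * ((n:ℝ)+2)^p) := by gcongr
      _ ≤ _ := by rw [add_mul]; linarith

lemma Bd.mul {p r : ℝ} {f g : ℕ → ℝ} (hf : Bd p f) (hg : Bd r g) :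
    Bd (p + r) (fun n => f n * g n) := by
  obtain ⟨A, hA0, hA⟩ := hf
  obtain ⟨B, hB0, hB⟩ := hg
  refine ⟨A * B, by positivity, fun n => ?_⟩
  have hk : (0:ℝ) < (n:ℝ)+1 := by positivity
  rw [abs_mul, Real.rpow_add hk]
  calc |f n| * |g n| ≤ (A * ((n:ℝ)+1)^p) * (B * ((n:ℝ)+1)^r) :=
        mul_le_mul (hA n) (hB n) (abs_nonneg _) (by positivity)
    _ = _ := by ring

lemma Bd.summable {p : ℝ} {f : ℕ → ℝ} (hf : Bd p f) (hp : p < -1) : Summable f := by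
  obtain ⟨A, hA0, hA⟩ := hf
  exact Summable.of_norm_bounded ((summable_rp hp).mul_left A) hA

lemma Bd_nq {b : ℝ} (hb : b < 3) : Bd (2*b-2) (fun n => ((n:ℝ)+1) * q b n) := by
  have h1 : Bd 1 (fun n => (n:ℝ)+1) :=
    ⟨1, by norm_num, fun n => by rw [abs_of_pos (by positivity)]; simp⟩
  have h2 : Bd (2*b-3) (q b) := q_bound b hb
  have := h1.mul h2
  rwa [show 1 + (2*b-3) = 2*b-2 by ring] at this

lemma K_bound {σ : ℝ} (hσ : 0 < σ) (m : ℕ) : Bd (-(2*σ)-2) (Kker σ m) := by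
  induction m using Nat.twoStepInduction with
  | zero => exact ⟨0, le_refl _, fun n => by simp [K_zero_left]⟩
  | one =>
    apply Bd.unshift
    have := (Bd_nq (show -σ < 3 by linarith)).smul (kf σ 0 * (2 * (2*σ+1) / ((σ+1)*(σ+2))))
    rw [show 2 * -σ - 2 = -(2*σ) - 2 by ring] at this
    convert this using 2 with n
    exact K_one hσ n
  | more m h0 h1 =>
    apply Bd.unshift
    have := ((h1.shift.shift).add h1).add (h0.shift.smul (-1))
    convert this using 2 with n
    rw [K_comm]; ring

noncomputable def cc (α : ℝ) : ℝ := 4 / (4 ^ α * √2) * Gamma (3/2 - α)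

noncomputable def J (α : ℝ) : ℕ → ℝ
  | 0 => 0
  | (n+1) => cc α * ((n+1) * P α n / Gamma (n + 3 - α))

lemma J_eq {α : ℝ} (hα : α < 3/2) (n : ℕ) :
    J α (n+1) = cc α / Gamma (3 - α) * ((n+1) * q α n) := by
  have h : 0 < 3 - α := by linarith
  rw [J, q, show (n:ℝ) + 3 - α = 3 - α + n by ring, Gamma_P h]
  have := (P_pos h n).ne'
  have := (Gamma_pos_of_pos h).ne'
  field_simp

lemma J_bound {α : ℝ} (hα : α < 3/2) : Bd (2*α-2) (J α) := by
  apply Bd.unshift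
  have := (Bd_nq (show α < 3 by linarith)).smul (cc α / Gamma (3 - α))
  convert this using 2 with n
  exact J_eq hα n

lemma cc_rec {α : ℝ} (hα : α < 3/2) : cc (α-1) = (6 - 4*α) * cc α := by
  unfold cc
  rw [show 3/2 - (α-1) = (3/2 - α) + 1 by ring, Real.Gamma_add_one (by linarith),
    Real.rpow_sub_one (by norm_num)]
  have : (4:ℝ)^α ≠ 0 := by positivity
  field_simp
  ring

lemma J_rec {α : ℝ} (hα : α < 3/2) (n : ℕ) :
    J α (n+2) + J α n = 2 * J α (n+1) - J (α-1) (n+1) := by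
  have g : ∀ x : ℝ, 0 < x → Gamma (x + 1) = x * Gamma x := fun x hx => Real.Gamma_add_one hx.ne'
  cases n with
  | zero =>
    have h : 0 < 3 - α := by linarith
    have := (Gamma_pos_of_pos h).ne'
    simp only [J, cc_rec hα, P_succ, P_zero]
    push_cast
    rw [show 1 + 3 - α = 3 - α + 1 by ring, show 0 + 3 - α = 3 - α by ring,
      show 0 + 3 - (α-1) = 3 - α + 1 by ring, g _ h]
    field_simp
    ring
  | succ n =>
    have hn : (0:ℝ) ≤ n := Nat.cast_nonneg n
    have h : 0 < n + 3 - α := by linarith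
    have h2 : 0 < n + 3 - α + 1 := by linarith
    have := (Gamma_pos_of_pos h).ne'
    simp only [J, cc_rec hα, P_succ', P_succ α]
    push_cast
    rw [show (n:ℝ) + 2 + 3 - α = n + 3 - α + 1 + 1 by ring,
      show (n:ℝ) + 1 + 3 - α = n + 3 - α + 1 by ring,
      show (n:ℝ) + 1 + 3 - (α-1) = n + 3 - α + 1 + 1 by ring, g _ h2, g _ h]
    field_simp
    ring

lemma KJ_summable {σ α : ℝ} (hσ : 0 < σ) (hα : α < 3/2) (m : ℕ) :
    Summable (fun n => Kker σ m n * J α n) :=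
  ((K_bound hσ m).mul (J_bound hα)).summable (by linarith)

noncomputable def S (σ α : ℝ) (m : ℕ) : ℝ := ∑' n, Kker σ m n * J α n

lemma J_zero (α : ℝ) : J α 0 = 0 := rfl

lemma S_shift {σ α : ℝ} (hσ : 0 < σ) (hα : α < 3/2) (m : ℕ) :
    HasSum (fun n => Kker σ m (n+1) * J α (n+1)) (S σ α m) := by
  have := (hasSum_nat_add_iff' 1).2 (KJ_summable hσ hα m).hasSum
  simpa [J_zero, S] using this

lemma S_rec {σ α : ℝ} (hσ : 0 < σ) (hα : α < 3/2) (m : ℕ) :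
    S σ α (m+2) = 2 * S σ α (m+1) - S σ (α-1) (m+1) - S σ α m := by
  have b1 : Summable (fun n => Kker σ (m+1) (n+1) * J α n) :=
    ((K_bound hσ (m+1)).shift.mul (J_bound hα)).summable (by linarith)
  have b2 : Summable (fun n => Kker σ (m+1) n * J α (n+1)) :=
    ((K_bound hσ (m+1)).mul (J_bound hα).shift).summable (by linarith)
  have h1 := (hasSum_nat_add_iff' 1).2 b1.hasSum
  have h2 := (hasSum_nat_add_iff' 1).2 b2.hasSum
  simp only [Finset.range_one, Finset.sum_singleton, K_zero_right, zero_mul, sub_zero, J_zero,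
    mul_zero] at h1 h2
  have r1 := (h1.add b2.hasSum).sub (S_shift hσ hα m)
  have r1' := S_shift hσ hα (m+2)
  have u1 := r1'.unique ((GS.hs_congr fun n => by rw [K_comm]; ring).2 r1)
  have r2 := (b1.hasSum.add h2)
  have r3 := ((S_shift hσ hα (m+1)).mul_left 2).sub (S_shift hσ (show α - 1 < 3/2 by linarith) (m+1))
  have u2 := r2.unique ((GS.hs_congr fun n => by
    linear_combination Kker σ (m+1) (n+1) * J_rec hα n).2 r3)
  linarith

lemma S_one {σ α : ℝ} (hσ : 0 < σ) (hα : α < 3/2) : S σ α 1 = J (α-σ) 1 := by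
  have h1 := S_shift hσ hα 1
  have h2 := ((t_summable (b := -σ) (c := α) (by linarith) hα (by linarith) (le_refl (3/2:ℝ))).hasSum).mul_left
    (kf σ 0 * (2 * (2*σ+1) / ((σ+1)*(σ+2))) * (cc α / Gamma (3-α)))
  have u := h1.unique ((GS.hs_congr fun n => by
    rw [K_one hσ, J_eq hα, t, q_half]; ring).2 h2)
  rw [u]
  change _ * F (-σ) α (3/2) = _
  have hF := F_eval (b := -σ) (c := α) (by linarith) hα (by linarith)
  have hD0 := D_pos (b := -σ) (c := α) (by linarith) hα (by linarith) (show (0:ℝ) ≤ 3/2 by norm_num)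
  rw [(eq_div_iff hD0.ne').2 hF]
  simp only [D, J, cc, P_zero, kf, rbinom]
  have g1 := (Gamma_pos_of_pos (show 0 < σ+1 by linarith)).ne'
  have g2 := (Gamma_pos_of_pos (show 0 < σ+3/2 by linarith)).ne'
  have g3 := (Gamma_pos_of_pos (show 0 < 3-α+σ by linarith)).ne'
  have g4 := (Gamma_pos_of_pos (show 0 < 3-α by linarith)).ne'
  have g5 := (Gamma_pos_of_pos (show 0 < 3/2-α+σ by linarith)).ne'
  have g6 := (Gamma_pos_of_pos (show 0 < 3/2-α by linarith)).ne'
  have dup := Real.Gamma_mul_Gamma_add_half (σ+1)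
  have e2 : (2:ℝ) ^ (1 - 2*(σ+1)) = 1 / (2 * 4^σ) := by
    rw [show 1 - 2*(σ+1) = -(1 + 2*σ) by ring, Real.rpow_neg (by norm_num),
      Real.rpow_add (by norm_num), Real.rpow_mul (by norm_num), Real.rpow_one]
    norm_num
  rw [e2, show σ + 1 + 1/2 = σ + 3/2 by ring, show 2*(σ+1) = (2*σ+1)+1 by ring,
    Real.Gamma_add_one (show 2*σ+1 ≠ 0 by linarith)] at dup
  have G3 : Gamma 3 = 2 := by
    rw [show (3:ℝ) = (2:ℕ) + 1 by norm_num, Real.Gamma_nat_eq_factorial]; norm_num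
  have G32 : Gamma (3/2) = √π / 2 := by
    rw [show (3/2:ℝ) = 1/2 + 1 by norm_num, Real.Gamma_add_one (by norm_num), Real.Gamma_one_half_eq]
    ring
  have Gs : Gamma (σ+3) = (σ+2) * (σ+1) * Gamma (σ+1) := by
    rw [show σ+3 = σ+1+1+1 by ring, Real.Gamma_add_one (by linarith), Real.Gamma_add_one (by linarith)]
    ring
  have r4 : (4:ℝ)^(α-σ) = 4^α / 4^σ := Real.rpow_sub (by norm_num) _ _
  push_cast
  rw [show 2*σ - (σ+0) + 1 = σ+1 by ring, show σ+0+1 = σ+1 by ring, show (3:ℝ)-3/2 = 3/2 by norm_num,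
    show 3 - -σ - α - 3/2 = 3/2-α+σ by ring, show 3 - -σ - 3/2 = σ+3/2 by ring,
    show 3-α-3/2 = 3/2-α by ring, show (3:ℝ)-0 = 3 by norm_num,
    show 3 - -σ-α-0 = 3-α+σ by ring, show 3 - -σ - 0 = σ+3 by ring, show 3-α-0 = 3-α by ring,
    show 3/2-(α-σ) = 3/2-α+σ by ring, show 0+3-(α-σ) = 3-α+σ by ring, G3, G32, Gs, r4]
  have f1 : (4:ℝ)^σ ≠ 0 := by positivity
  have f2 : (4:ℝ)^α ≠ 0 := by positivity
  have f3 : √(2:ℝ) ≠ 0 := by positivity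
  have f4 : √π ≠ 0 := by positivity
  have f5 : Gamma (2*σ+1) ≠ 0 := (Gamma_pos_of_pos (by linarith)).ne'
  have f6 : 2*σ+1 ≠ 0 := by linarith
  have f7 : σ+1 ≠ 0 := by linarith
  have f8 : σ+2 ≠ 0 := by linarith
  generalize Gamma (σ+1) = X at *
  generalize Gamma (σ+3/2) = Y at *
  generalize Gamma (3-α+σ) = Z at *
  generalize Gamma (3-α) = U at *
  generalize Gamma (3/2-α+σ) = V at *
  generalize Gamma (3/2-α) = T at *
  generalize Gamma (2*σ+1) = A at *
  have hA : A = 2 * 4^σ * X * Y / ((2*σ+1) * √π) := by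
    rw [eq_div_iff (mul_ne_zero f6 f4)]
    field_simp at dup
    linarith
  rw [hA]
  field_simp
  try ring

theorem S_eq {σ : ℝ} (hσ : 0 < σ) (m : ℕ) : ∀ α : ℝ, α < 3/2 → S σ α m = J (α-σ) m := by
  induction m using Nat.twoStepInduction with
  | zero => intro α _; simp [S, K_zero_left, J_zero]
  | one => intro α hα; exact S_one hσ hα
  | more m h0 h1 =>
    intro α hα
    rw [S_rec hσ hα, h0 α hα, h1 α hα, h1 (α-1) (by linarith)]
    have := J_rec (show α - σ < 3/2 by linarith) m
    rw [show α - 1 - σ = α - σ - 1 by ring]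
    linarith

lemma Riesz_eq {α : ℝ} (hα0 : 0 < α) (n : ℕ) : Riesz α n = J α n := by
  cases n with
  | zero => simp [Riesz, J_zero]
  | succ n =>
    rw [Riesz, J, cc]
    push_cast
    rw [show (n:ℝ) + 1 + α - 1 = α + n by ring, Gamma_P hα0,
      show (n:ℝ) + 1 - α + 2 = n + 3 - α by ring]
    have := (Gamma_pos_of_pos hα0).ne'
    field_simp

lemma Riesz_pos {α : ℝ} (hα0 : 0 < α) (hα : α < 3/2) {n : ℕ} (hn : 1 ≤ n) : 0 < Riesz α n := by
  have h : (1:ℝ) ≤ n := by exact_mod_cast hn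
  have h1 := Gamma_pos_of_pos hα0
  have h2 := Gamma_pos_of_pos (show 0 < 3/2 - α by linarith)
  have h3 := Gamma_pos_of_pos (show 0 < n + α - 1 by linarith)
  have h4 := Gamma_pos_of_pos (show 0 < n - α + 2 by linarith)
  unfold Riesz; positivity

lemma W_Riesz {σ α : ℝ} (hσ : 0 < σ) (hα : α < 3/2) (h : σ < α) {n : ℕ} (hn : 1 ≤ n) :
    Wweight σ α n * Riesz α n = Riesz (α-σ) n := by
  have hn' : (1:ℝ) ≤ n := by exact_mod_cast hn
  have h1 := (Gamma_pos_of_pos (show 0 < α by linarith)).ne'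
  have h2 := (Gamma_pos_of_pos (show 0 < 3/2 - α by linarith)).ne'
  have h3 := (Gamma_pos_of_pos (show 0 < n + α - 1 by linarith)).ne'
  have h4 := (Gamma_pos_of_pos (show 0 < n - α + 2 by linarith)).ne'
  have h5 := (Gamma_pos_of_pos (show 0 < α - σ by linarith)).ne'
  have h6 := (Gamma_pos_of_pos (show 0 < n - α + σ + 2 by linarith)).ne'
  have f1 : (4:ℝ)^σ ≠ 0 := by positivity
  have f2 : (4:ℝ)^α ≠ 0 := by positivity
  have f3 : √(2:ℝ) ≠ 0 := by positivity
  unfold Wweight Riesz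
  rw [Real.rpow_sub (by norm_num), show 3/2 - (α-σ) = 3/2-α+σ by ring,
    show (n:ℝ) + (α-σ) - 1 = n+α-σ-1 by ring, show (n:ℝ) - (α-σ) + 2 = n-α+σ+2 by ring]
  generalize Gamma (3/2-α) = A at *
  generalize Gamma (3/2-α+σ) = B at *
  field_simp

lemma K_Riesz {σ α : ℝ} (hσ : 0 < σ) (hα : α < 3/2) (h : σ < α) (m : ℕ) (hm : 1 ≤ m) :
    HasSum (fun n => Kker σ m n * Riesz α n) (Wweight σ α m * Riesz α m) := by
  rw [W_Riesz hσ hα h hm, Riesz_eq (by linarith), ← S_eq hσ m α hα]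
  have := (KJ_summable hσ hα m).hasSum
  simpa only [S, Riesz_eq (show 0 < α by linarith)] using this

end GS
namespace GS

lemma row_hasSum {T : Finset ℕ} {A : ℕ → ℕ → ℝ} {a : ℕ → ℝ} (h0 : ∀ m ∉ T, ∀ n, A m n = 0)
    (h : ∀ m ∈ T, HasSum (A m) (a m)) :
    HasSum (fun p : ℕ × ℕ => A p.1 p.2) (∑ m ∈ T, a m) := by
  have h1 : ∀ m ∈ T, HasSum (fun p : ℕ × ℕ => if p.1 = m then A p.1 p.2 else 0) (a m) := by
    intro m hm
    have inj : Function.Injective (fun n : ℕ => (m, n)) := fun x y hxy => by simpa using hxy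
    rw [← inj.hasSum_iff]
    · refine (GS.hs_congr fun n => ?_).2 (h m hm)
      simp
    · rintro ⟨x, y⟩ hx
      have : x ≠ m := by rintro rfl; exact hx ⟨y, rfl⟩
      simp [this]
  refine (GS.hs_congr fun p => ?_).2 (hasSum_sum h1)
  rw [Finset.sum_ite_eq]
  split_ifs with hp
  · rfl
  · exact h0 _ hp _

end GS

/-- Ground state representation of `(-Δ_ℕ)^σ - W_{α,σ}`. -/
theorem stmt_3 (σ α : ℝ) (hσ0 : 0 < σ) (hσ1 : σ ≤ 1)
    (hα0 : 0 < α) (hα3 : α < 3/2) (hα1 : σ < α) (hα2 : α < 1 + σ)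
    (φ : ℕ → ℝ) (hφ0 : φ 0 = 0) (hφ : (Function.support φ).Finite) :
    Summable (fun p : ℕ × ℕ =>
      if 1 ≤ p.1 ∧ 1 ≤ p.2 ∧ p.1 ≠ p.2 then
        (-(Kker σ p.1 p.2)) * Riesz α p.1 * Riesz α p.2 *
          (φ p.2 / Riesz α p.2 - φ p.1 / Riesz α p.1) ^ 2
      else 0) ∧
    Qform σ φ - (∑' n : ℕ, Wweight σ α n * (φ n) ^ 2) =
      (1/2) * ∑' p : ℕ × ℕ,
        (if 1 ≤ p.1 ∧ 1 ≤ p.2 ∧ p.1 ≠ p.2 then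
          (-(Kker σ p.1 p.2)) * Riesz α p.1 * Riesz α p.2 *
            (φ p.2 / Riesz α p.2 - φ p.1 / Riesz α p.1) ^ 2
        else 0) := by
  obtain ⟨T, hT⟩ : ∃ T : Finset ℕ, T = hφ.toFinset := ⟨_, rfl⟩
  have hT0 : ∀ n, n ∉ T → φ n = 0 := fun n hn => by simpa [hT] using hn
  have hT1 : ∀ n ∈ T, 1 ≤ n := fun n hn => by
    rcases Nat.eq_zero_or_pos n with rfl | h
    · simp [hT, hφ0] at hn
    · exact h
  have hI : ∀ n, 1 ≤ n → Riesz α n ≠ 0 := fun n hn => (GS.Riesz_pos hα0 hα3 hn).ne'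
  set I := Riesz α with hIdef
  set u : ℕ → ℝ := fun n => φ n / I n with hu
  have hu0 : ∀ n, n ∉ T → u n = 0 := fun n hn => by simp [hu, hT0 n hn]
  have huI : ∀ n, I n * u n = φ n := fun n => by
    rcases Nat.eq_zero_or_pos n with rfl | h
    · simp [hu, hφ0]
    · simp only [hu]; rw [mul_div_cancel₀ _ (hI n h)]
  -- the diagonal-type part
  have hA : HasSum (fun p : ℕ × ℕ => if p.1 ≠ p.2 then
      -(Kker σ p.1 p.2) * I p.1 * I p.2 * u p.1 ^ 2 else 0)
      (∑ m ∈ T, -(Wweight σ α m * I m - Kker σ m m * I m) * (I m * u m ^ 2)) := by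
    refine GS.row_hasSum (A := fun m n => if m ≠ n then
      -(Kker σ m n) * I m * I n * u m ^ 2 else 0) (fun m hm n => by simp [hu0 m hm]) ?_
    intro m hm
    have k := (GS.K_Riesz hσ0 hα3 hα1 m (hT1 m hm)).sub (hasSum_ite_eq m (Kker σ m m * I m))
    have k2 := k.neg.mul_right (I m * u m ^ 2)
    refine (GS.hs_congr fun n => ?_).2 k2
    by_cases hmn : n = m
    · subst hmn; simp [hIdef]
    · rw [if_pos (Ne.symm hmn), if_neg hmn]; ring
  have hA' : HasSum (fun p : ℕ × ℕ => if p.1 ≠ p.2 then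
      -(Kker σ p.1 p.2) * I p.1 * I p.2 * u p.2 ^ 2 else 0)
      (∑ m ∈ T, -(Wweight σ α m * I m - Kker σ m m * I m) * (I m * u m ^ 2)) := by
    rw [← (Equiv.prodComm ℕ ℕ).hasSum_iff]
    refine (GS.hs_congr fun p => ?_).2 hA
    simp only [Function.comp, Equiv.prodComm_apply, Prod.fst_swap, Prod.snd_swap]
    rw [GS.K_symm σ p.2 p.1]
    simp only [ne_comm (a := p.2)]
    split_ifs <;> ring
  have hB : HasSum (fun p : ℕ × ℕ => if p.1 ≠ p.2 then Kker σ p.1 p.2 * φ p.1 * φ p.2 else 0)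
      (∑ m ∈ T, (∑ n ∈ T, Kker σ m n * φ m * φ n - Kker σ m m * φ m * φ m)) := by
    refine GS.row_hasSum (A := fun m n => if m ≠ n then Kker σ m n * φ m * φ n else 0)
      (fun m hm n => by simp [hT0 m hm]) ?_
    intro m hm
    have k := (hasSum_sum_of_ne_finset_zero (s := T) (f := fun n => Kker σ m n * φ m * φ n)
      (fun n hn => by simp [hT0 n hn])).sub (hasSum_ite_eq m (Kker σ m m * φ m * φ m))
    refine (GS.hs_congr fun n => ?_).2 k
    by_cases hmn : n = m
    · subst hmn; simp
    · rw [if_pos (Ne.symm hmn), if_neg hmn]; ring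
  have hf := (hA.add hA').add (hB.mul_left 2)
  have hmain := (GS.hs_congr (f := fun p : ℕ × ℕ =>
      if 1 ≤ p.1 ∧ 1 ≤ p.2 ∧ p.1 ≠ p.2 then
        (-(Kker σ p.1 p.2)) * I p.1 * I p.2 *
          (φ p.2 / I p.2 - φ p.1 / I p.1) ^ 2
      else 0) (fun p => by
    obtain ⟨m, n⟩ := p
    simp only
    by_cases hmn : m = n
    · simp [hmn]
    rcases Nat.eq_zero_or_pos m with rfl | hm
    · simp [GS.K_zero_left]
    rcases Nat.eq_zero_or_pos n with rfl | hn
    · simp [GS.K_zero_right]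
    rw [if_pos ⟨hm, hn, hmn⟩, if_pos hmn, if_pos hmn, if_pos hmn, ← huI m, ← huI n]
    have e1 : I m * u m / I m = u m := mul_div_cancel_left₀ _ (hI m hm)
    have e2 : I n * u n / I n = u n := mul_div_cancel_left₀ _ (hI n hn)
    rw [e1, e2]; ring)).2 hf
  refine ⟨hmain.summable, ?_⟩
  rw [hmain.tsum_eq]
  have hQ : Qform σ φ = ∑ m ∈ T, ∑ n ∈ T, Kker σ m n * φ m * φ n := by
    rw [Qform, tsum_eq_sum (s := T) (fun m hm => by simp [hT0 m hm])]
    refine Finset.sum_congr rfl fun m _ => ?_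
    rw [tsum_eq_sum (s := T) (fun n hn => by simp [hT0 n hn])]
  have hW : ∑' n : ℕ, Wweight σ α n * (φ n) ^ 2 = ∑ n ∈ T, Wweight σ α n * (φ n) ^ 2 :=
    tsum_eq_sum (fun n hn => by simp [hT0 n hn])
  rw [hQ, hW, Finset.sum_sub_distrib]
  have e : ∑ m ∈ T, -(Wweight σ α m * I m - Kker σ m m * I m) * (I m * u m ^ 2) =
      ∑ m ∈ T, Kker σ m m * φ m * φ m - ∑ m ∈ T, Wweight σ α m * φ m ^ 2 := by
    rw [← Finset.sum_sub_distrib]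
    refine Finset.sum_congr rfl fun m _ => ?_
    rw [← huI m]; ring
  rw [e]; ring
end

section
/- Let σ ∈ (0,1]. Then for all integers m,n ≥ 1 with m ≠ n, the off-diagonal kernel entries are nonpositive: K^σ_{m,n} ≤ 0. -/
open Real Filter

theorem rb_succ (σ : ℝ) (h0 : 0 < σ) (k : ℕ) :
    rbinom (2 * σ) (σ + ((k + 1 : ℕ) : ℝ)) =
      rbinom (2 * σ) (σ + k) * ((σ - k) / (σ + k + 1)) := by
  unfold rbinom
  have hp : 0 < σ + k + 1 := by positivity
  have e1 : σ + ((k + 1 : ℕ) : ℝ) + 1 = (σ + k + 1) + 1 := by push_cast; ring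
  have e2 : 2 * σ - (σ + ((k + 1 : ℕ) : ℝ)) + 1 = σ - k := by push_cast; ring
  have e3 : 2 * σ - (σ + k) + 1 = (σ - k) + 1 := by ring
  rw [e1, e2, e3, Real.Gamma_add_one hp.ne']
  by_cases h : σ - k = 0
  · rw [h, Real.Gamma_zero]; simp
  · rw [Real.Gamma_add_one h]
    have := (Real.Gamma_pos_of_pos hp).ne'
    by_cases hg : Real.Gamma (σ - k) = 0
    · rw [hg]; simp
    · field_simp

noncomputable def cc (σ : ℝ) (k : ℕ) : ℝ := (-1 : ℝ) ^ k * rbinom (2 * σ) (σ + k)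

theorem cc_succ (σ : ℝ) (h0 : 0 < σ) (k : ℕ) :
    cc σ (k + 1) = cc σ k * ((k - σ) / (σ + k + 1)) := by
  unfold cc
  rw [rb_succ σ h0, pow_succ]
  ring

theorem cc_nonpos (σ : ℝ) (h0 : 0 < σ) (h1 : σ ≤ 1) (k : ℕ) : cc σ (k + 1) ≤ 0 := by
  induction k with
  | zero =>
    rw [cc_succ σ h0]
    apply mul_nonpos_of_nonneg_of_nonpos
    · unfold cc rbinom
      have a1 : 0 < Real.Gamma (2 * σ + 1) := Real.Gamma_pos_of_pos (by linarith)
      have a2 : 0 < Real.Gamma (σ + 1) := Real.Gamma_pos_of_pos (by linarith)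
      have e : 2 * σ - σ + 1 = σ + 1 := by ring
      simp only [Nat.cast_zero, add_zero, pow_zero, one_mul, e]
      positivity
    · apply div_nonpos_of_nonpos_of_nonneg
      · simp; linarith
      · positivity
  | succ k ih =>
    rw [cc_succ σ h0]
    apply mul_nonpos_of_nonpos_of_nonneg ih
    apply div_nonneg
    · push_cast
      have : (0 : ℝ) ≤ k := by positivity
      linarith
    · positivity

theorem cc_mono (σ : ℝ) (h0 : 0 < σ) (h1 : σ ≤ 1) : Monotone (fun k => cc σ (k + 1)) := by
  apply monotone_nat_of_le_succ
  intro k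
  rw [cc_succ σ h0 (k + 1)]
  have h := cc_nonpos σ h0 h1 k
  have : (((k + 1 : ℕ) : ℝ) - σ) / (σ + ((k + 1 : ℕ) : ℝ) + 1) ≤ 1 := by
    rw [div_le_one (by positivity)]
    linarith
  nlinarith

theorem rb_symm (σ k : ℝ) : rbinom (2 * σ) (σ - k) = rbinom (2 * σ) (σ + k) := by
  unfold rbinom
  rw [show 2 * σ - (σ - k) + 1 = σ + k + 1 by ring, show 2 * σ - (σ + k) + 1 = σ - k + 1 by ring,
    mul_comm (Real.Gamma (σ - k + 1))]

theorem Kker_aux (σ : ℝ) (h0 : 0 < σ) (h1 : σ ≤ 1) (m d : ℕ) :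
    (-1 : ℝ) ^ (m + (m + (d + 1))) * (rbinom (2 * σ) (σ + ((d + 1 : ℕ) : ℝ)) -
      rbinom (2 * σ) (σ + ((m + (m + d) + 1 : ℕ) : ℝ))) ≤ 0 := by
  have h : cc σ (d + 1) ≤ cc σ (m + (m + d) + 1) :=
    cc_mono σ h0 h1 (show d ≤ m + (m + d) by omega)
  have e1 : (-1 : ℝ) ^ (m + (m + (d + 1))) = (-1 : ℝ) ^ (d + 1) := by
    rw [← add_assoc, pow_add, Even.neg_one_pow ⟨m, rfl⟩, one_mul]
  have e2 : (-1 : ℝ) ^ (m + (m + d) + 1) = (-1 : ℝ) ^ (d + 1) := by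
    rw [← e1]; congr 1
  unfold cc at h
  rw [e2] at h
  rw [e1, mul_sub]
  linarith

/-- Off-diagonal entries of the kernel of `(-Δ_ℕ)^σ` are nonpositive for `σ ∈ (0,1]`. -/
theorem stmt_4 (σ : ℝ) (hσ0 : 0 < σ) (hσ1 : σ ≤ 1)
    (m n : ℕ) (hm : 1 ≤ m) (hn : 1 ≤ n) (hmn : m ≠ n) :
    Kker σ m n ≤ 0 := by
  unfold Kker
  rcases lt_or_gt_of_ne hmn with h | h
  · obtain ⟨d, rfl⟩ := Nat.exists_eq_add_of_lt h
    have := Kker_aux σ hσ0 hσ1 m d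
    rw [← rb_symm σ ((d + 1 : ℕ) : ℝ)] at this
    convert this using 4 <;> push_cast <;> ring
  · obtain ⟨d, rfl⟩ := Nat.exists_eq_add_of_lt h
    have := Kker_aux σ hσ0 hσ1 n d
    rw [add_comm (n + d + 1) n]
    convert this using 4 <;> push_cast <;> ring
end

section
/- Let σ ∈ (0,1) and n ≥ 1 an integer. Then the series R^σ_n := Σ_{m≥1} K^σ_{m,n} converges and equals (2/π)·sin(πσ)·Γ(2σ)·Γ(n−σ)·n/Γ(n+σ+1); in particular R^σ_n ≥ 0. -/
open Real Filter

lemma aux_ne (σ : ℝ) (hσ0 : 0 < σ) (hσ1 : σ < 1) (k : ℤ) : (k : ℝ) + σ ≠ 0 ∧ (k : ℝ) - σ ≠ 0 := by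
  constructor
  · intro h
    have h1 : (-1 : ℝ) < k := by linarith
    have h2 : (k : ℝ) < 0 := by linarith
    have h1' : (-1 : ℤ) < k := by exact_mod_cast h1
    have h2' : k < 0 := by exact_mod_cast h2
    omega
  · intro h
    have h1 : (0 : ℝ) < k := by linarith
    have h2 : (k : ℝ) < 1 := by linarith
    have h1' : (0 : ℤ) < k := by exact_mod_cast h1
    have h2' : k < 1 := by exact_mod_cast h2
    omega

lemma aux_Gne (σ : ℝ) (hσ0 : 0 < σ) (hσ1 : σ < 1) (k : ℤ) :
    Real.Gamma (k + σ) ≠ 0 ∧ Real.Gamma (k - σ) ≠ 0 := by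
  constructor
  · apply Real.Gamma_ne_zero
    intro m h
    apply (aux_ne σ hσ0 hσ1 (k + m)).1
    push_cast; linarith
  · apply Real.Gamma_ne_zero
    intro m h
    apply (aux_ne σ hσ0 hσ1 (k + m)).2
    push_cast; linarith

noncomputable def BB (σ : ℝ) (k : ℤ) : ℝ :=
  Real.Gamma (2 * σ) * Real.sin (π * σ) / π * (Real.Gamma (k + 1 - σ) / Real.Gamma (k + 1 + σ))

lemma BB_rec (σ : ℝ) (hσ0 : 0 < σ) (hσ1 : σ < 1) (k : ℤ) :
    BB σ k = BB σ (k - 1) * ((k - σ) / (k + σ)) := by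
  unfold BB
  obtain ⟨h1, h2⟩ := aux_ne σ hσ0 hσ1 k
  obtain ⟨h3, h4⟩ := aux_Gne σ hσ0 hσ1 k
  push_cast
  rw [show (k : ℝ) + 1 - σ = (k - σ) + 1 by ring, show (k : ℝ) + 1 + σ = (k + σ) + 1 by ring,
    Real.Gamma_add_one h1, Real.Gamma_add_one h2]
  simp only [sub_add_cancel]
  field_simp

lemma aux_sinpos (σ : ℝ) (hσ0 : 0 < σ) (hσ1 : σ < 1) : 0 < Real.sin (π * σ) := by
  apply Real.sin_pos_of_pos_of_lt_pi
  · positivity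
  · nlinarith [Real.pi_pos]

lemma rb_eq (σ : ℝ) (hσ0 : 0 < σ) (hσ1 : σ < 1) (k : ℤ) :
    (-1 : ℝ) ^ k * rbinom (2 * σ) (σ + k) = BB σ k - BB σ (k - 1) := by
  rw [BB_rec σ hσ0 hσ1 k]
  unfold BB rbinom
  obtain ⟨h1, h2⟩ := aux_ne σ hσ0 hσ1 k
  obtain ⟨h3, h4⟩ := aux_Gne σ hσ0 hσ1 k
  have h5 := (aux_Gne σ hσ0 hσ1 (1 - k)).1
  have hr := Real.Gamma_mul_Gamma_one_sub ((k : ℝ) - σ)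
  have hs : Real.sin (π * (k - σ)) = -((-1) ^ k * Real.sin (π * σ)) := by
    rw [← Real.sin_int_mul_pi_sub]; congr 1; ring
  have hp := aux_sinpos σ hσ0 hσ1
  have hpi := Real.pi_pos
  have hsq : ((-1 : ℝ) ^ k) * (-1) ^ k = 1 := by
    rw [← mul_zpow]; norm_num
  have hz : ((-1 : ℝ) ^ k) ≠ 0 := by positivity
  rw [hs] at hr
  push_cast at h5 ⊢
  rw [show 2 * σ - (σ + k) + 1 = 1 - (k : ℝ) + σ by ring, show σ + (k : ℝ) + 1 = (k + σ) + 1 by ring,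
    Real.Gamma_add_one h1, Real.Gamma_add_one (by positivity : 2 * σ ≠ 0)]
  simp only [sub_add_cancel]
  rw [show 1 - ((k : ℝ) - σ) = 1 - (k : ℝ) + σ by ring] at hr
  rw [eq_div_iff (by simp [hz, hp.ne'])] at hr
  clear hs
  generalize Real.sin (π * σ) = S at *
  generalize (-1 : ℝ) ^ k = e at *
  rw [← hr]
  have hS := hp.ne'
  have : e ^ 2 = 1 := by rw [sq, hsq]
  field_simp
  try rw [this]
  ring

lemma BB_neg (σ : ℝ) (hσ0 : 0 < σ) (hσ1 : σ < 1) (n : ℤ) :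
    BB σ (-n) = - (Real.Gamma (2 * σ) * Real.sin (π * σ) / π *
      (Real.Gamma (n - σ) / Real.Gamma (n + σ))) := by
  unfold BB
  obtain ⟨h3, h4⟩ := aux_Gne σ hσ0 hσ1 n
  obtain ⟨h5, h6⟩ := aux_Gne σ hσ0 hσ1 (1 - n)
  have hr1 := Real.Gamma_mul_Gamma_one_sub ((n : ℝ) - σ)
  have hr2 := Real.Gamma_mul_Gamma_one_sub ((n : ℝ) + σ)
  have hs1 : Real.sin (π * (n - σ)) = -((-1) ^ n * Real.sin (π * σ)) := by
    rw [← Real.sin_int_mul_pi_sub]; congr 1; ring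
  have hs2 : Real.sin (π * (n + σ)) = ((-1) ^ n * Real.sin (π * σ)) := by
    rw [← Real.sin_add_int_mul_pi]; congr 1; ring
  rw [hs1, div_neg] at hr1
  rw [hs2] at hr2
  push_cast at h5 h6 ⊢
  rw [show 1 - ((n : ℝ) - σ) = 1 - (n : ℝ) + σ by ring] at hr1
  rw [show 1 - ((n : ℝ) + σ) = 1 - (n : ℝ) - σ by ring] at hr2
  rw [show -(n : ℝ) + 1 = 1 - n by ring]
  have : Real.Gamma (1 - n - σ) / Real.Gamma (1 - n + σ)
      = - (Real.Gamma (n - σ) / Real.Gamma (n + σ)) := by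
    rw [← neg_div, div_eq_div_iff h5 h3]
    linarith
  rw [this]; ring

lemma BB_pos (σ : ℝ) (hσ0 : 0 < σ) (hσ1 : σ < 1) (k : ℕ) : 0 < BB σ k := by
  unfold BB
  have hp := aux_sinpos σ hσ0 hσ1
  have hk : (0 : ℝ) ≤ k := Nat.cast_nonneg k
  have h1 : 0 < Real.Gamma (2 * σ) := Real.Gamma_pos_of_pos (by positivity)
  push_cast
  have h2 : 0 < Real.Gamma (k + 1 - σ) := Real.Gamma_pos_of_pos (by linarith)
  have h3 : 0 < Real.Gamma (k + 1 + σ) := Real.Gamma_pos_of_pos (by linarith)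
  positivity

lemma BB_diff (σ : ℝ) (hσ0 : 0 < σ) (hσ1 : σ < 1) (k : ℕ) :
    BB σ k - BB σ ((k + 1 : ℕ) : ℤ) = BB σ k * (2 * σ / (k + 1 + σ)) := by
  rw [BB_rec σ hσ0 hσ1 ((k + 1 : ℕ) : ℤ)]
  have hk : (0 : ℝ) ≤ k := Nat.cast_nonneg k
  have : (k : ℝ) + 1 + σ ≠ 0 := by positivity
  push_cast
  simp only [add_sub_cancel_right]
  field_simp
  ring

lemma BB_summable (σ : ℝ) (hσ0 : 0 < σ) (hσ1 : σ < 1) :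
    Summable (fun k : ℕ => BB σ k - BB σ ((k + 1 : ℕ) : ℤ)) := by
  apply summable_of_sum_range_le (c := BB σ 0)
  · intro k
    rw [BB_diff σ hσ0 hσ1]
    have := BB_pos σ hσ0 hσ1 k
    positivity
  · intro N
    rw [Finset.sum_range_sub' (fun k : ℕ => BB σ (k : ℤ))]
    have := BB_pos σ hσ0 hσ1 N
    simp only [Nat.cast_zero]
    linarith

lemma BB_tendsto (σ : ℝ) (hσ0 : 0 < σ) (hσ1 : σ < 1) :
    Tendsto (fun k : ℕ => BB σ k) atTop (nhds 0) := by
  have hanti : Antitone (fun k : ℕ => BB σ k) := by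
    apply antitone_nat_of_succ_le
    intro k
    have h := BB_diff σ hσ0 hσ1 k
    have := BB_pos σ hσ0 hσ1 k
    have h2 : 0 ≤ BB σ k * (2 * σ / (k + 1 + σ)) := by positivity
    linarith
  have hbdd : BddBelow (Set.range (fun k : ℕ => BB σ k)) :=
    ⟨0, by rintro _ ⟨k, rfl⟩; exact (BB_pos σ hσ0 hσ1 k).le⟩
  have ht := tendsto_atTop_ciInf hanti hbdd
  set L := ⨅ k : ℕ, BB σ k with hL
  have hLle : ∀ k : ℕ, L ≤ BB σ k := fun k => ciInf_le hbdd k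
  have hL0 : 0 ≤ L := le_ciInf (fun k => (BB_pos σ hσ0 hσ1 k).le)
  rcases hL0.eq_or_lt with h | h
  · rw [h]; exact ht
  exfalso
  have hs : Summable (fun k : ℕ => L * σ * (1 / ((k + 1 : ℕ) : ℝ))) := by
    refine Summable.of_nonneg_of_le (fun k => by positivity) (fun k => ?_) (BB_summable σ hσ0 hσ1)
    rw [BB_diff σ hσ0 hσ1, mul_assoc]
    apply mul_le_mul (hLle k) _ (by positivity) (BB_pos σ hσ0 hσ1 k).le
    push_cast
    have hk : (0 : ℝ) ≤ k := Nat.cast_nonneg k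
    rw [mul_one_div, div_le_div_iff₀ (by positivity) (by positivity)]
    nlinarith [mul_nonneg hσ0.le hk]
  rw [summable_mul_left_iff (by positivity)] at hs
  exact Real.not_summable_one_div_natCast ((summable_nat_add_iff 1).1 hs)

lemma Kker_eq (σ : ℝ) (hσ0 : 0 < σ) (hσ1 : σ < 1) (m n : ℕ) :
    Kker σ m n = (BB σ ((m : ℤ) - n) - BB σ ((m : ℤ) - n - 1)) -
      (BB σ ((m : ℤ) + n) - BB σ ((m : ℤ) + n - 1)) := by
  rw [← rb_eq σ hσ0 hσ1, ← rb_eq σ hσ0 hσ1]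
  have h1 : (-1 : ℝ) ^ ((m : ℤ) + n) = (-1) ^ (m + n) := by
    rw [← Nat.cast_add, zpow_natCast]
  have h2 : (-1 : ℝ) ^ ((m : ℤ) - n) = (-1) ^ (m + n) := by
    rw [← h1, show (m : ℤ) + n = (m - n) + 2 * n by ring, zpow_add₀ (by norm_num), zpow_mul]
    norm_num
  rw [h1, h2]
  unfold Kker
  push_cast
  rw [show σ + ((m : ℝ) - n) = σ + m - n by ring, show σ + ((m : ℝ) + n) = σ + m + n by ring]
  ring

/-- The potential term `R^σ_n = Σ_{m≥1} K^σ_{m,n}` converges and is nonnegative. -/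
theorem stmt_5 (σ : ℝ) (hσ0 : 0 < σ) (hσ1 : σ < 1) (n : ℕ) (hn : 1 ≤ n) :
    Summable (fun m : ℕ => Kker σ (m + 1) n) ∧
    (∑' m : ℕ, Kker σ (m + 1) n) =
      2 / π * Real.sin (π * σ) * Real.Gamma (2 * σ) * Real.Gamma (n - σ) * n /
        Real.Gamma (n + σ + 1) ∧
    0 ≤ 2 / π * Real.sin (π * σ) * Real.Gamma (2 * σ) * Real.Gamma (n - σ) * n /
        Real.Gamma (n + σ + 1) := by
  have hp := aux_sinpos σ hσ0 hσ1
  have hn1 : (1 : ℝ) ≤ n := by exact_mod_cast hn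
  have hG1 : 0 < Real.Gamma (n - σ) := Real.Gamma_pos_of_pos (by linarith)
  have hG2 : 0 < Real.Gamma (n + σ + 1) := Real.Gamma_pos_of_pos (by linarith)
  have hG3 : 0 < Real.Gamma (2 * σ) := Real.Gamma_pos_of_pos (by linarith)
  have hG4 : 0 < Real.Gamma (n + σ) := Real.Gamma_pos_of_pos (by linarith)
  have hS := BB_summable σ hσ0 hσ1
  have hsum : Summable (fun m : ℕ => Kker σ (m + 1) n) := by
    rw [← summable_nat_add_iff n]
    have hS2 := (summable_nat_add_iff (n + n)).2 hS
    convert hS2.sub hS using 2 with m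
    rw [Kker_eq σ hσ0 hσ1]
    push_cast
    rw [show (m : ℤ) + n + 1 - n = m + 1 by ring, show (m : ℤ) + 1 - 1 = m by ring,
      show (m : ℤ) + n + 1 + n = m + (n + n) + 1 by ring,
      show (m : ℤ) + (n + n) + 1 - 1 = m + (n + n) by ring]
    ring
  have hpart : ∀ N : ℕ, ∑ m ∈ Finset.range N, Kker σ (m + 1) n =
      (BB σ ((N : ℤ) - n) - BB σ ((N : ℤ) + n)) - (BB σ (-n) - BB σ n) := by
    intro N
    have := Finset.sum_range_sub (fun N : ℕ => BB σ ((N : ℤ) - n) - BB σ ((N : ℤ) + n)) N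
    simp only [Nat.cast_zero, zero_sub, zero_add] at this
    rw [← this]
    apply Finset.sum_congr rfl
    intro m _
    rw [Kker_eq σ hσ0 hσ1]
    push_cast
    rw [show (m : ℤ) + 1 - n - 1 = m - n by ring, show (m : ℤ) + 1 + n - 1 = m + n by ring]
    ring
  have hT := BB_tendsto σ hσ0 hσ1
  have hT1 : Tendsto (fun N : ℕ => BB σ ((N : ℤ) + n)) atTop (nhds 0) := by
    have := (tendsto_add_atTop_iff_nat n).2 hT
    simpa only [Nat.cast_add] using this
  have hT2 : Tendsto (fun N : ℕ => BB σ ((N : ℤ) - n)) atTop (nhds 0) := by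
    rw [← tendsto_add_atTop_iff_nat n]
    simpa using hT
  have hlim : Tendsto (fun N => ∑ m ∈ Finset.range N, Kker σ (m + 1) n) atTop
      (nhds (0 - 0 - (BB σ (-n) - BB σ n))) := by
    simp only [hpart]
    exact (hT2.sub hT1).sub_const _
  have hval := tendsto_nhds_unique hsum.hasSum.tendsto_sum_nat hlim
  refine ⟨hsum, ?_, by positivity⟩
  rw [hval, BB_neg σ hσ0 hσ1]
  unfold BB
  push_cast
  rw [show (n : ℝ) + 1 - σ = (n - σ) + 1 by ring, show (n : ℝ) + 1 + σ = (n + σ) + 1 by ring,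
    Real.Gamma_add_one (ne_of_gt (by linarith) : (n : ℝ) - σ ≠ 0),
    Real.Gamma_add_one (ne_of_gt (by linarith) : (n : ℝ) + σ ≠ 0)]
  have : (n : ℝ) + σ ≠ 0 := ne_of_gt (by linarith)
  field_simp
  ring
end

section
/- Let σ, α ∈ (0,3/2) with σ < α < 1+σ. Then for every integer n ≥ 1 the series Σ_{m≥1} K^σ_{m,n}·I_α(m) converges absolutely and Σ_{m≥1} K^σ_{m,n}·I_α(m) = I_{α−σ}(n); that is, (−Δ_ℕ)^σ I_α = I_{α−σ}. In particular, I_α is a strictly positive supersolution of (−Δ_ℕ)^σ u = 0 on ℕ. -/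
open Real Filter

section
open Topology


noncomputable def pch (d : ℝ) (k : ℕ) : ℝ := ∏ i ∈ Finset.range k, (d + i)

lemma pch_zero (d : ℝ) : pch d 0 = 1 := by simp [pch]
lemma pch_succ (d : ℝ) (k : ℕ) : pch d (k+1) = pch d k * (d + k) := by
  simp [pch, Finset.prod_range_succ]
lemma pch_succ' (d : ℝ) (k : ℕ) : pch d (k+1) = d * pch (d+1) k := by
  simp only [pch, Finset.prod_range_succ']
  push_cast
  simp only [add_zero, mul_comm]
  congr 1
  refine Finset.prod_congr rfl fun i _ => by ring
lemma pch_pos {d : ℝ} (hd : 0 < d) (k : ℕ) : 0 < pch d k :=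
  Finset.prod_pos fun i _ => by positivity

lemma Gamma_pch {s : ℝ} (hs : 0 < s) (k : ℕ) : Gamma (s + k) = pch s k * Gamma s := by
  induction k with
  | zero => simp [pch_zero]
  | succ k ih =>
    have : s + ((k+1 : ℕ):ℝ) = (s + k) + 1 := by push_cast; ring
    rw [this, Gamma_add_one (by positivity), ih, pch_succ]; ring

lemma u_tendsto (d : ℝ) :
    Tendsto (fun n : ℕ => pch d (n+1) / ((n:ℝ)^d * (n.factorial : ℝ))) atTop (𝓝 (Gamma d)⁻¹) := by
  by_cases h : Gamma d = 0
  · rw [h, inv_zero]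
    obtain ⟨m, hm⟩ := Real.Gamma_eq_zero_iff d |>.1 h
    refine tendsto_const_nhds.congr' ?_
    filter_upwards [eventually_ge_atTop m] with n hn
    have : pch d (n+1) = 0 := Finset.prod_eq_zero (i := m) (by simp; omega) (by rw [hm]; ring)
    rw [this, zero_div]
  · refine ((GammaSeq_tendsto_Gamma d).inv₀ h).congr fun n => ?_
    rw [GammaSeq, inv_div, pch]

noncomputable def aa (d : ℝ) (k : ℕ) : ℝ := (k+1) * pch d k / pch (3-d) k

lemma aa_zero (d : ℝ) : aa d 0 = 1 := by simp [aa, pch_zero]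
lemma aa_succ (d : ℝ) (hd : d < 3/2) (k : ℕ) :
    aa d (k+1) = aa d k * ((k+2) * (d+k) / ((k+1) * (3-d+k))) := by
  have h := (pch_pos (d := 3-d) (by linarith) k).ne'
  have h2 : (3-d+k) ≠ 0 := by have : (0:ℝ) ≤ k := by positivity
                              linarith
  rw [aa, aa, pch_succ, pch_succ]; push_cast; field_simp; ring
lemma aa_shift (d : ℝ) (hd : d < 3/2) (k : ℕ) :
    aa (d-1) (k+1) = aa d k * ((k+2) * ((d-1)*(3-d)) / ((k+1) * ((3-d+k)*(4-d+k)))) := by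
  have h := (pch_pos (d := 3-d) (by linarith) k).ne'
  have hk : (0:ℝ) ≤ k := by positivity
  have h2 : (3-d+k) ≠ 0 := by linarith
  have h3 : (4-d+k) ≠ 0 := by linarith
  have h4 : 3-d ≠ 0 := by linarith
  have e1 : pch (d-1) (k+1) = (d-1) * pch d k := by rw [pch_succ']; congr 2; ring
  have e2 : pch (3-(d-1)) (k+1) * (3-d) = pch (3-d) k * (3-d+k) * (4-d+k) := by
    have := pch_succ' (3-d) (k+1)
    rw [pch_succ, pch_succ] at this
    rw [show 3-(d-1) = 3-d+1 by ring]
    push_cast at this; linear_combination -this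
  have e3 : pch (3-(d-1)) (k+1) = pch (3-d) k * (3-d+k) * (4-d+k) / (3-d) := by
    field_simp; linarith
  rw [aa, aa, e1, e3]; push_cast; field_simp; ring

lemma aa_isBigO (d : ℝ) (hd : d < 3/2) :
    (fun n : ℕ => aa d (n+1)) =O[atTop] fun n : ℕ => (n:ℝ)^(2*d-2) := by
  have hG : (Gamma (3-d))⁻¹ ≠ 0 := inv_ne_zero (Gamma_pos_of_pos (by linarith)).ne'
  have h1 := (u_tendsto d).div (u_tendsto (3-d)) hG
  have h2 : Tendsto (fun n : ℕ => (1:ℝ) + 2 / n) atTop (𝓝 (1+0)) :=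
    tendsto_const_nhds.add (tendsto_const_div_atTop_nhds_zero_nat 2)
  have h3 := (h1.mul h2).isBigO_one ℝ
  have h4 := h3.mul (Asymptotics.isBigO_refl (fun n : ℕ => (n:ℝ)^(2*d-2)) atTop)
  refine (h4.congr' ?_ ?_)
  · filter_upwards [eventually_gt_atTop 0] with n hn
    have hn' : (0:ℝ) < n := by exact_mod_cast hn
    have hp := (pch_pos (d := 3-d) (by linarith) (n+1)).ne'
    have e : (n:ℝ)^(2*d-2) = (n:ℝ)^d / (n:ℝ)^(3-d) * n := by
      rw [← rpow_sub hn', ← rpow_add_one hn'.ne']; congr 1; ring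
    have q1 := (rpow_pos_of_pos hn' d).ne'
    have q2 := (rpow_pos_of_pos hn' (3-d)).ne'
    have q3 : (n.factorial : ℝ) ≠ 0 := by positivity
    simp only [aa, Pi.div_apply]
    rw [e]; push_cast; field_simp; ring
  · filter_upwards with n; simp

lemma aamul_isBigO (c d : ℝ) (hc : c < 3/2) (hd : d < 3/2) :
    (fun n : ℕ => aa c (n+1) * aa d (n+1)) =O[atTop] fun n : ℕ => (n:ℝ)^(2*(c+d)-4) := by
  refine ((aa_isBigO c hc).mul (aa_isBigO d hd)).congr' (by rfl) ?_
  filter_upwards [eventually_gt_atTop 0] with n hn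
  have hn' : (0:ℝ) < n := by exact_mod_cast hn
  rw [← rpow_add hn']; congr 1; ring

lemma aa_summable (c d : ℝ) (hc : c < 3/2) (hd : d < 3/2) (h : c + d < 3/2) :
    Summable (fun k => aa c k * aa d k) := by
  rw [← summable_nat_add_iff 1]
  exact summable_of_isBigO_nat (Real.summable_nat_rpow.2 (by linarith)) (aamul_isBigO c d hc hd)

noncomputable def GG (c d : ℝ) (k : ℕ) : ℝ :=
  (3-d)/2 * (aa c k * aa d k) * ((c+k)*(k+2)*(k+3/2)/((k+3-d)*(k+1)))

lemma GG_sum (c d : ℝ) (hc : c < 3/2) (hd : d < 3/2) (k : ℕ) :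
    ∑ j ∈ Finset.range (k+1), ((3/2-d)*(3-c-d) * (aa c j * aa (d-1) j)
      - (3-d)*(3/2-c-d) * (aa c j * aa d j)) = GG c d k := by
  induction k with
  | zero => 
    have : 3 - d ≠ 0 := by linarith
    simp [aa_zero, GG]; field_simp; ring
  | succ k ih =>
    have hk : (0:ℝ) ≤ k := by positivity
    have h2 : (3-d+k) ≠ 0 := by linarith
    have h3 : (4-d+k) ≠ 0 := by linarith
    have h4 : (3-c+k) ≠ 0 := by linarith
    have h5 : ((k:ℝ)+3-d) ≠ 0 := by linarith
    have h6 : ((k:ℝ)+1+3-d) ≠ 0 := by linarith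
    have h7 : ((k:ℝ)+1) ≠ 0 := by linarith
    have h8 : ((k:ℝ)+1+1) ≠ 0 := by linarith
    rw [Finset.sum_range_succ, ih, aa_shift d hd, aa_succ c hc, aa_succ d hd, GG, GG,
      aa_succ c hc, aa_succ d hd]
    push_cast
    field_simp
    ring

lemma GG_tendsto (c d : ℝ) (hc : c < 3/2) (hd : d < 3/2) (h : c + d < 3/2) :
    Tendsto (fun n => GG c d (n+1)) atTop (𝓝 0) := by
  have t : ∀ x : ℝ, Tendsto (fun n : ℕ => (1:ℝ) + x / n) atTop (𝓝 (1+0)) := fun x =>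
    tendsto_const_nhds.add (tendsto_const_div_atTop_nhds_zero_nat x)
  have hm := ((((t (c+1)).mul (t 3)).mul (t (5/2))).div ((t (4-d)).mul (t 2)) (by norm_num)).const_mul
     ((3-d)/2)
  have h3 := hm.isBigO_one ℝ
  have h4 := (h3.mul (aamul_isBigO c d hc hd)).mul
    (Asymptotics.isBigO_refl (fun n : ℕ => (n:ℝ)) atTop)
  have h5 : Tendsto (fun n : ℕ => (n:ℝ)^(-(3-2*(c+d)))) atTop (𝓝 0) :=
    (tendsto_rpow_neg_atTop (by linarith)).comp tendsto_natCast_atTop_atTop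
  refine (h4.congr' ?_ ?_).trans_tendsto h5
  · filter_upwards [eventually_gt_atTop 0] with n hn
    have hn' : (0:ℝ) < n := by exact_mod_cast hn
    have h6 : ((n:ℝ)+1+3-d) ≠ 0 := by linarith
    have h7 : ((n:ℝ)+1+1) ≠ 0 := by linarith
    have h8 : ((n:ℝ)+(4-d)) ≠ 0 := by linarith
    have h9 : ((n:ℝ)+2) ≠ 0 := by linarith
    simp only [GG, Pi.div_apply]
    have e : ∀ x : ℝ, 1 + x / n = (n + x) / n := fun x => by field_simp
    simp only [e]
    push_cast; field_simp; ring
  · filter_upwards [eventually_gt_atTop 0] with n hn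
    have hn' : (0:ℝ) < n := by exact_mod_cast hn
    rw [one_mul, ← rpow_add_one hn'.ne']; congr 1; ring

noncomputable def AA (c d : ℝ) : ℝ := ∑' k, aa c k * aa d k

lemma AA_comm (c d : ℝ) : AA c d = AA d c := by simp [AA, mul_comm]

lemma AA_rec (c d : ℝ) (hc : c < 3/2) (hd : d < 3/2) (h : c + d < 3/2) :
    (3/2-d)*(3-c-d) * AA c (d-1) = (3-d)*(3/2-c-d) * AA c d := by
  have s1 := (aa_summable c (d-1) hc (by linarith) (by linarith)).hasSum.mul_left ((3/2-d)*(3-c-d))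
  have s2 := (aa_summable c d hc hd h).hasSum.mul_left ((3-d)*(3/2-c-d))
  have s3 := (s1.sub s2).tendsto_sum_nat
  have s4 := s3.comp (tendsto_add_atTop_nat 2)
  have := tendsto_nhds_unique s4 ((GG_tendsto c d hc hd h).congr fun n =>
    (GG_sum c d hc hd (n+1)).symm)
  unfold AA; linarith

noncomputable def VV (c d : ℝ) : ℝ := Gamma (3-c) * Gamma (3-d) * Gamma (3/2) * Gamma (3/2-c-d) /
  (2 * Gamma (3/2-c) * Gamma (3/2-d) * Gamma (3-c-d))

lemma VV_comm (c d : ℝ) : VV c d = VV d c := by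
  unfold VV
  rw [show 3/2-c-d = 3/2-d-c by ring, show 3-c-d = 3-d-c by ring]; ring

lemma VV_pos (c d : ℝ) (hc : c < 3/2) (hd : d < 3/2) (h : c + d < 3/2) : 0 < VV c d := by
  have h1 := Gamma_pos_of_pos (s := 3-c) (by linarith)
  have h2 := Gamma_pos_of_pos (s := 3-d) (by linarith)
  have h3 := Gamma_pos_of_pos (s := 3/2) (by linarith)
  have h4 := Gamma_pos_of_pos (s := 3/2-c-d) (by linarith)
  have h5 := Gamma_pos_of_pos (s := 3/2-c) (by linarith)
  have h6 := Gamma_pos_of_pos (s := 3/2-d) (by linarith)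
  have h7 := Gamma_pos_of_pos (s := 3-c-d) (by linarith)
  unfold VV; positivity

lemma VV_rec (c d : ℝ) (hc : c < 3/2) (hd : d < 3/2) (h : c + d < 3/2) :
    (3/2-d)*(3-c-d) * VV c (d-1) = (3-d)*(3/2-c-d) * VV c d := by
  have h5 := (Gamma_pos_of_pos (s := 3/2-c) (by linarith)).ne'
  have h6 := (Gamma_pos_of_pos (s := 3/2-d) (by linarith)).ne'
  have h7 := (Gamma_pos_of_pos (s := 3-c-d) (by linarith)).ne'
  have n1 : 3/2-d ≠ 0 := by linarith
  have n2 : 3-c-d ≠ 0 := by linarith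
  unfold VV
  rw [show 3-(d-1) = (3-d)+1 by ring, show 3/2-c-(d-1) = (3/2-c-d)+1 by ring,
    show 3/2-(d-1) = (3/2-d)+1 by ring, show 3-c-(d-1) = (3-c-d)+1 by ring,
    Gamma_add_one (by linarith), Gamma_add_one (by linarith), Gamma_add_one n1,
    Gamma_add_one n2]
  generalize Gamma (3/2-c) = g5 at *
  generalize Gamma (3/2-d) = g6 at *
  generalize Gamma (3-c-d) = g7 at *
  generalize Gamma (3/2-c-d) = g8 at *
  generalize 3/2-d = z1 at *
  generalize 3-c-d = z2 at *
  generalize 3/2-c-d = z3 at *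
  field_simp

lemma CC_rec (c d : ℝ) (hc : c < 3/2) (hd : d < 3/2) (h : c + d < 3/2) :
    AA c (d-1) / VV c (d-1) = AA c d / VV c d := by
  have p1 := VV_pos c d hc hd h
  have p2 := VV_pos c (d-1) hc (by linarith) (by linarith)
  have a := AA_rec c d hc hd h
  have v := VV_rec c d hc hd h
  rw [div_eq_div_iff p2.ne' p1.ne']
  have n : (3/2-d)*(3-c-d) ≠ 0 := mul_ne_zero (by linarith) (by linarith)
  apply mul_left_cancel₀ n
  linear_combination VV c d * a - AA c d * v

lemma CC_iter (c d : ℝ) (hc : c < 3/2) (hd : d < 3/2) (h : c + d < 3/2) (N : ℕ) :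
    AA c (d-N) / VV c (d-N) = AA c d / VV c d := by
  induction N with
  | zero => simp
  | succ N ih =>
    have : (0:ℝ) ≤ N := by positivity
    rw [← ih, ← CC_rec c (d-N) hc (by linarith) (by linarith)]
    push_cast; rw [sub_sub]

lemma aa_bound (d : ℝ) (hd : d ≤ 0) (k : ℕ) : |aa d k| ≤ k + 1 := by
  have : |pch d k| ≤ pch (3-d) k := by
    unfold pch
    rw [Finset.abs_prod]
    refine Finset.prod_le_prod (fun _ _ => abs_nonneg _) fun i _ => ?_
    have : (0:ℝ) ≤ i := by positivity
    rw [abs_le]; constructor <;> linarith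
  have hp := pch_pos (d := 3-d) (by linarith) k
  rw [aa, abs_div, abs_mul, abs_of_pos hp, div_le_iff₀ hp, abs_of_pos (by positivity : (0:ℝ) < k+1)]
  gcongr

lemma aa_lim (d : ℝ) (hd : d ≤ 0) (k : ℕ) :
    Tendsto (fun n : ℕ => aa (d - (n+1:ℕ)) k) atTop (𝓝 ((k+1) * (-1)^k)) := by
  have key : ∀ i : ℕ, Tendsto (fun n : ℕ => (d - (n+1:ℕ) + i) / (3 - (d - (n+1:ℕ)) + i)) atTop (𝓝 (-1)) := by
    intro i
    have t : ∀ x : ℝ, Tendsto (fun n : ℕ => (1:ℝ) + x / n) atTop (𝓝 (1+0)) := fun x =>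
      tendsto_const_nhds.add (tendsto_const_div_atTop_nhds_zero_nat x)
    have := ((t (-(d-1+i))).neg).div (t (4-d+i)) (by norm_num)
    norm_num at this
    refine this.congr' ?_
    filter_upwards [eventually_gt_atTop 0] with n hn
    have hn' : (0:ℝ) < n := by exact_mod_cast hn
    have hi : (0:ℝ) ≤ i := by positivity
    have e : ∀ x : ℝ, 1 + x / n = (n + x) / n := fun x => by field_simp
    have z1 : 3 - (d - ((n:ℝ)+1)) + i ≠ 0 := by linarith
    have z2 : (n:ℝ) + (4-d+i) ≠ 0 := by linarith
    have z3 : 1 + (4-d+i)/(n:ℝ) ≠ 0 := by rw [e]; positivity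
    simp only [Pi.div_apply]
    rw [div_eq_div_iff (by simpa using z3) (by push_cast; exact z1)]
    push_cast; field_simp; ring
  have h := (tendsto_finsetProd (Finset.range k) fun i _ => key i).const_mul ((k:ℝ)+1)
  simp only [Finset.prod_const, Finset.card_range] at h
  refine h.congr fun n => ?_
  rw [Finset.prod_div_distrib, aa, pch, pch, mul_div_assoc]

lemma AA_lim (c d : ℝ) (hc : c < 0) (hd : d ≤ 0) :
    Tendsto (fun n : ℕ => AA c (d - (n+1:ℕ))) atTop (𝓝 (∑' k : ℕ, aa c k * ((k+1) * (-1)^k))) := by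
  unfold AA
  refine tendsto_tsum_of_dominated_convergence (bound := fun k => |aa c k| * (k+1)) ?_ ?_ ?_
  · rw [← summable_nat_add_iff 1]
    have h1 := (aa_isBigO c (by linarith)).norm_left
    have t : Tendsto (fun n : ℕ => (1:ℝ) + 2 / n) atTop (𝓝 (1+0)) :=
      tendsto_const_nhds.add (tendsto_const_div_atTop_nhds_zero_nat 2)
    have h2 := (h1.mul (t.isBigO_one ℝ)).mul (Asymptotics.isBigO_refl (fun n : ℕ => (n:ℝ)) atTop)
    refine summable_of_isBigO_nat (Real.summable_nat_rpow.2 (by linarith : 2*c-1 < -1)) (h2.congr' ?_ ?_)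
    · filter_upwards [eventually_gt_atTop 0] with n hn
      have hn' : (0:ℝ) < n := by exact_mod_cast hn
      rw [Real.norm_eq_abs]; push_cast; field_simp; ring
    · filter_upwards [eventually_gt_atTop 0] with n hn
      have hn' : (0:ℝ) < n := by exact_mod_cast hn
      rw [mul_one, ← rpow_add_one hn'.ne']; congr 1; ring
  · intro k
    exact (aa_lim d hd k).const_mul _
  · refine Eventually.of_forall fun n k => ?_
    rw [Real.norm_eq_abs, abs_mul]
    have : (0:ℝ) ≤ n := by positivity
    exact mul_le_mul_of_nonneg_left (aa_bound _ (by push_cast; linarith) k) (abs_nonneg _)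

lemma Gamma_asymp (s : ℝ) (hs : 0 < s) :
    Tendsto (fun n : ℕ => Gamma (s + (n+1:ℕ)) / ((n:ℝ)^s * (n.factorial : ℝ))) atTop (𝓝 1) := by
  have g := (Gamma_pos_of_pos hs).ne'
  have := (u_tendsto s).mul_const (Gamma s)
  rw [inv_mul_cancel₀ g] at this
  refine this.congr fun n => ?_
  rw [Gamma_pch hs]; ring

lemma VV_lim (c d : ℝ) (hc : c < 0) (hd : d ≤ 0) :
    Tendsto (fun n : ℕ => VV c (d - (n+1:ℕ))) atTop
      (𝓝 (Gamma (3-c) * Gamma (3/2) / (2 * Gamma (3/2-c)))) := by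
  have h := (((Gamma_asymp (3-d) (by linarith)).mul (Gamma_asymp (3/2-c-d) (by linarith))).div
    ((Gamma_asymp (3/2-d) (by linarith)).mul (Gamma_asymp (3-c-d) (by linarith)))
      (by norm_num)).const_mul (Gamma (3-c) * Gamma (3/2) / (2 * Gamma (3/2-c)))
  norm_num only [mul_one] at h
  refine h.congr' ?_
  filter_upwards [eventually_gt_atTop 0] with n hn
  have hn' : (0:ℝ) < n := by exact_mod_cast hn
  have q1 := (rpow_pos_of_pos hn' (3-d)).ne'
  have q2 := (rpow_pos_of_pos hn' (3/2-c-d)).ne'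
  have q3 := (rpow_pos_of_pos hn' (3/2-d)).ne'
  have q4 := (rpow_pos_of_pos hn' (3-c-d)).ne'
  have e : (n:ℝ)^(3-d) * (n:ℝ)^(3/2-c-d) = (n:ℝ)^(3/2-d) * (n:ℝ)^(3-c-d) := by
    rw [← rpow_add hn', ← rpow_add hn']; congr 1; ring
  have qf : (n.factorial : ℝ) ≠ 0 := by positivity
  have g1 := (Gamma_pos_of_pos (s := 3/2-c) (by linarith)).ne'
  have g2 := (Gamma_pos_of_pos (s := 3/2-d+(n+1:ℕ)) (by push_cast; linarith)).ne'
  have g3 := (Gamma_pos_of_pos (s := 3-c-d+(n+1:ℕ)) (by push_cast; linarith)).ne'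
  simp only [Pi.div_apply]
  unfold VV
  rw [show 3-(d-(n+1:ℕ)) = 3-d+(n+1:ℕ) by ring, show 3/2-(d-(n+1:ℕ)) = 3/2-d+(n+1:ℕ) by ring,
    show 3/2-c-(d-(n+1:ℕ)) = 3/2-c-d+(n+1:ℕ) by ring,
    show 3-c-(d-(n+1:ℕ)) = 3-c-d+(n+1:ℕ) by ring]
  generalize Gamma (3-d+(n+1:ℕ)) = w1
  generalize Gamma (3/2-c-d+(n+1:ℕ)) = w2
  generalize Gamma (3/2-d+(n+1:ℕ)) = w3 at *
  generalize Gamma (3-c-d+(n+1:ℕ)) = w4 at *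
  generalize (n:ℝ)^(3-d) = r1 at *
  generalize (n:ℝ)^(3/2-c-d) = r2 at *
  generalize (n:ℝ)^(3/2-d) = r3 at *
  generalize (n:ℝ)^(3-c-d) = r4 at *
  generalize Gamma (3/2-c) = r5 at *
  field_simp
  linear_combination (-e) * (Gamma (3-c) * w1 * w2)

lemma AA_c0 (c : ℝ) : AA c 0 = 1 := by
  unfold AA
  rw [tsum_eq_single 0]
  · simp [aa_zero]
  · intro k hk
    obtain ⟨j, rfl⟩ := Nat.exists_eq_succ_of_ne_zero hk
    have : pch 0 (j+1) = 0 := by rw [pch_succ']; ring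
    simp [aa, this]

lemma VV_c0 (c : ℝ) (hc : c < 3/2) : VV c 0 = 1 := by
  have h1 := (Gamma_pos_of_pos (s := 3-c) (by linarith)).ne'
  have h3 := (Gamma_pos_of_pos (s := 3/2) (by linarith)).ne'
  have h5 := (Gamma_pos_of_pos (s := 3/2-c) (by linarith)).ne'
  have : Gamma 3 = 2 := by
    rw [show (3:ℝ) = ((2:ℕ):ℝ) + 1 by norm_num, Gamma_nat_eq_factorial 2]
    norm_num [Nat.factorial]
  unfold VV; simp only [sub_zero, this]
  generalize Gamma (3/2-c) = r5 at *
  field_simp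

lemma AA_eq_neg (c d : ℝ) (hc : c < 0) (hd : d ≤ 0) : AA c d / VV c d = 1 := by
  have v0 : Gamma (3-c) * Gamma (3/2) / (2 * Gamma (3/2-c)) ≠ 0 := by
    have h1 := (Gamma_pos_of_pos (s := 3-c) (by linarith))
    have h3 := (Gamma_pos_of_pos (s := 3/2) (by linarith))
    have h5 := (Gamma_pos_of_pos (s := 3/2-c) (by linarith))
    positivity
  have key : ∀ d ≤ 0, AA c d / VV c d =
      (∑' k : ℕ, aa c k * ((k+1) * (-1)^k)) / (Gamma (3-c) * Gamma (3/2) / (2 * Gamma (3/2-c))) := by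
    intro d hd
    have := (AA_lim c d hc hd).div (VV_lim c d hc hd) v0
    refine tendsto_nhds_unique (tendsto_const_nhds.congr fun n => ?_) this
    exact (CC_iter c d (by linarith) (by linarith) (by linarith) (n+1)).symm
  rw [key d hd, ← key 0 le_rfl, AA_c0, VV_c0 c (by linarith)]; norm_num

lemma AA_eq (c d : ℝ) (hc : c < 3/2) (hd : d ≤ 0) : AA c d = VV c d := by
  have h := CC_iter d c (by linarith) hc (by linarith) 2
  have h2 := AA_eq_neg (c-2) d (by linarith) hd
  rw [AA_comm, VV_comm] at h2
  push_cast at h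
  rw [h2, AA_comm, VV_comm] at h
  have := (VV_pos c d hc (by linarith) (by linarith)).ne'
  field_simp at h; exact h.symm

noncomputable def Rr (β : ℝ) (n : ℕ) : ℝ :=
  (4 * n / (4 ^ β * Real.sqrt 2)) * Real.Gamma (3/2 - β) * pch β (n-1) / Real.Gamma (n - β + 2)

noncomputable def R1 (β : ℝ) : ℝ :=
  (4 / (4 ^ β * Real.sqrt 2)) * Real.Gamma (3/2 - β) / Real.Gamma (3 - β)

lemma Rr_eq (β : ℝ) (hβ : β < 3/2) (k : ℕ) : Rr β (k+1) = R1 β * aa β k := by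
  have h := Gamma_pch (s := 3-β) (by linarith) k
  have g := (Gamma_pos_of_pos (s := 3-β) (by linarith)).ne'
  have p := (pch_pos (d := 3-β) (by linarith) k).ne'
  unfold Rr R1 aa
  rw [show (((k+1:ℕ):ℝ) - β + 2) = 3-β+k by push_cast; ring, h, Nat.add_sub_cancel]
  generalize Gamma (3/2-β) = g1
  push_cast
  field_simp

lemma R1_rec (β : ℝ) (hβ : β < 3/2) : R1 (β-1) = R1 β * (4*(3/2-β)/(3-β)) := by
  have g := (Gamma_pos_of_pos (s := 3-β) (by linarith)).ne'
  have z : 3-β ≠ 0 := by linarith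
  unfold R1
  rw [show 3/2-(β-1) = (3/2-β)+1 by ring, show 3-(β-1) = (3-β)+1 by ring,
    Gamma_add_one (by linarith), Gamma_add_one z, rpow_sub_one (by norm_num)]
  generalize Gamma (3/2-β) = g1
  have : (4:ℝ)^β ≠ 0 := by positivity
  field_simp

lemma Rr_lap (β : ℝ) (hβ : β < 3/2) (n : ℕ) :
    Rr (β-1) (n+1) = 2 * Rr β (n+1) - Rr β (n+2) - Rr β n := by
  have z : 3-β ≠ 0 := by linarith
  rw [Rr_eq _ (by linarith), Rr_eq _ hβ, Rr_eq β hβ (n+1), R1_rec β hβ]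
  cases n with
  | zero =>
    rw [aa_succ β hβ]
    simp [aa_zero, Rr]
    field_simp; ring
  | succ k =>
    have hk : (0:ℝ) ≤ k := by positivity
    have h2 : (3-β+k) ≠ 0 := by linarith
    have h3 : (4-β+k) ≠ 0 := by linarith
    have h4 : (3-β+(k+1)) ≠ 0 := by linarith
    have h7 : ((k:ℝ)+1) ≠ 0 := by linarith
    have h8 : ((k:ℝ)+1+1) ≠ 0 := by linarith
    rw [Rr_eq _ hβ, aa_shift β hβ, aa_succ β hβ (k+1), aa_succ β hβ k]
    push_cast
    field_simp
    ring

lemma ig (s : ℝ) : (Gamma s)⁻¹ = s * (Gamma (s+1))⁻¹ := by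
  rcases eq_or_ne s 0 with rfl | h
  · simp [Gamma_zero]
  · rw [Gamma_add_one h, mul_inv, mul_inv_cancel_left₀ h]

lemma rbinom_rec (σ x : ℝ) (hσ : 0 < σ) :
    rbinom (2*(σ+1)) (σ+1+x) = 2 * rbinom (2*σ) (σ+x) + rbinom (2*σ) (σ+(x+1))
      + rbinom (2*σ) (σ+(x-1)) := by
  unfold rbinom
  simp only [div_eq_mul_inv, mul_inv]
  rw [show 2*(σ+1)+1 = 2*σ+1+1+1 by ring, Gamma_add_one (by positivity : 2*σ+1+1 ≠ 0),
    Gamma_add_one (by positivity : 2*σ+1 ≠ 0),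
    show 2*(σ+1) - (σ+1+x) + 1 = σ - x + 2 by ring, show σ+1+x+1 = σ+x+2 by ring,
    show 2*σ-(σ+x)+1 = σ-x+1 by ring, show σ+(x+1)+1 = σ+x+2 by ring,
    show 2*σ-(σ+(x+1))+1 = σ-x by ring, show σ+(x-1)+1 = σ+x by ring,
    show 2*σ-(σ+(x-1))+1 = σ-x+2 by ring, ig (σ-x), ig (σ+x), ig (σ-x+1), ig (σ+x+1),
    show σ-x+1+1 = σ-x+2 by ring, show σ+x+1+1 = σ+x+2 by ring]
  ring

lemma Kker_rec (σ : ℝ) (hσ : 0 < σ) (m n : ℕ) :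
    Kker σ m (n+2) = 2 * Kker σ m (n+1) - Kker σ m n - Kker (σ+1) m (n+1) := by
  have h1 := rbinom_rec σ (m-(n+1)) hσ
  have h2 := rbinom_rec σ (m+(n+1)) hσ
  rw [show σ+1+((m:ℝ)-(n+1)) = σ+1+m-(n+1) by ring, show σ+((m:ℝ)-(n+1)) = σ+m-(n+1) by ring,
    show σ+((m:ℝ)-(n+1)+1) = σ+m-n by ring, show σ+((m:ℝ)-(n+1)-1) = σ+m-(n+2) by ring] at h1
  rw [show σ+1+((m:ℝ)+(n+1)) = σ+1+m+(n+1) by ring, show σ+((m:ℝ)+(n+1)) = σ+m+(n+1) by ring,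
    show σ+((m:ℝ)+(n+1)+1) = σ+m+(n+2) by ring, show σ+((m:ℝ)+(n+1)-1) = σ+m+n by ring] at h2
  unfold Kker
  push_cast
  rw [h1, h2]
  ring

lemma Kker_zero (σ : ℝ) (m : ℕ) : Kker σ m 0 = 0 := by simp [Kker]

lemma ig_pch (σ : ℝ) (k : ℕ) :
    (Gamma (σ - k + 1))⁻¹ = (-1)^k * pch (-σ) k * (Gamma (σ+1))⁻¹ := by
  induction k with
  | zero => simp [pch_zero]
  | succ k ih =>
    rw [ig, show σ - ((k+1:ℕ):ℝ) + 1 + 1 = σ - k + 1 by push_cast; ring, ih, pch_succ]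
    push_cast; ring

lemma Kker_one (σ : ℝ) (hσ : 0 < σ) (k : ℕ) :
    Kker σ (k+1) 1 = 4 * 4^σ * Gamma (σ+3/2) / (√π * Gamma (σ+3)) * aa (-σ) k := by
  have hdup := Gamma_mul_Gamma_add_half (σ+1)
  have e2 : (2:ℝ)^(1-2*(σ+1)) = (2 * 4^σ)⁻¹ := by
    rw [show 1-2*(σ+1) = -(1+2*σ) by ring, rpow_neg (by norm_num), rpow_add (by norm_num),
      rpow_mul (by norm_num)]
    norm_num
  rw [e2, show σ+1+1/2 = σ+3/2 by ring, show 2*(σ+1) = 2*σ+1+1 by ring,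
    Gamma_add_one (by positivity : 2*σ+1 ≠ 0)] at hdup
  have g1 := (Gamma_pos_of_pos (s := σ+1) (by linarith)).ne'
  have g3 := (Gamma_pos_of_pos (s := σ+3) (by linarith)).ne'
  have gk := (Gamma_pos_of_pos (s := σ+k+1) (by positivity)).ne'
  have hπ : √π ≠ 0 := by positivity
  have h4 : (4:ℝ)^σ ≠ 0 := by positivity
  have hp := (pch_pos (d := σ+3) (by linarith) k).ne'
  have i1 := ig_pch σ k
  have i2 : (Gamma (σ-k-1))⁻¹ = (σ-k-1)*(σ-k)*(Gamma (σ-k+1))⁻¹ := by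
    rw [ig, show σ-k-1+1 = σ-k by ring, ig (σ-k)]; ring
  have gg : Gamma (σ+k+3) = (σ+k+2)*(σ+k+1)*Gamma (σ+k+1) := by
    rw [show σ+k+3 = σ+k+1+1+1 by ring, Gamma_add_one (by positivity),
      Gamma_add_one (by positivity)]; ring
  have gp : Gamma (σ+k+3) = pch (σ+3) k * Gamma (σ+3) := by
    rw [← Gamma_pch (by linarith)]; congr 1; ring
  have q1 : (Gamma (σ+k+1))⁻¹ = (σ+k+2)*(σ+k+1) * (pch (σ+3) k * Gamma (σ+3))⁻¹ := by
    rw [← gp, gg]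
    have : σ+k+2 ≠ 0 := by positivity
    have : σ+k+1 ≠ 0 := by positivity
    field_simp
  have hs : ((-1:ℝ))^k * (-1)^k = 1 := by rw [← mul_pow]; norm_num
  have hd : Gamma (2*σ+1) * (2*σ+1) * (Gamma (σ+1))⁻¹ = Gamma (σ+3/2) * (2*4^σ) / √π := by
    field_simp at hdup ⊢
    linear_combination -hdup
  unfold Kker rbinom aa
  simp only [div_eq_mul_inv, mul_inv]
  push_cast
  rw [show σ+((k:ℝ)+1)-1+1 = σ+k+1 by ring, show 2*σ-(σ+((k:ℝ)+1)-1)+1 = σ-k+1 by ring,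
    show σ+((k:ℝ)+1)+1+1 = σ+k+3 by ring, show 2*σ-(σ+((k:ℝ)+1)+1)+1 = σ-k-1 by ring,
    i2, i1, q1, gp, show 3 - -σ = σ+3 by ring, pow_add, pow_succ]
  simp only [div_eq_mul_inv, mul_inv] at hd ⊢
  linear_combination (2*(k+1) * pch (-σ) k * (pch (σ+3) k)⁻¹ * (Gamma (σ+3))⁻¹) * hd + (Gamma (2*σ+1) * (2*σ+1) * (Gamma (σ+1))⁻¹ * 2*(k+1) * pch (-σ) k * (pch (σ+3) k)⁻¹ * (Gamma (σ+3))⁻¹) * hs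

lemma const_eq (σ α : ℝ) (hσ : 0 < σ) (hα : α < 3/2) :
    4 * 4^σ * Gamma (σ+3/2) / (√π * Gamma (σ+3)) * R1 α * VV α (-σ) = R1 (α-σ) := by
  have g1 := (Gamma_pos_of_pos (s := σ+3) (by linarith)).ne'
  have g2 := (Gamma_pos_of_pos (s := σ+3/2) (by linarith)).ne'
  have g3 := (Gamma_pos_of_pos (s := 3-α) (by linarith)).ne'
  have g4 := (Gamma_pos_of_pos (s := 3/2-α) (by linarith)).ne'
  have g5 := (Gamma_pos_of_pos (s := 3-(α-σ)) (by linarith)).ne'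
  have hh : Gamma (3/2) = √π / 2 := by
    rw [show (3/2:ℝ) = 1/2+1 by norm_num, Gamma_add_one (by norm_num), Gamma_one_half_eq]; ring
  have hπ : √π ≠ 0 := by positivity
  have h4 : (4:ℝ)^σ ≠ 0 := by positivity
  have h4a : (4:ℝ)^α ≠ 0 := by positivity
  unfold R1 VV
  rw [hh, rpow_sub (by norm_num), show 3 - -σ = σ+3 by ring, show 3/2 - -σ = σ+3/2 by ring,
    show 3/2-α- -σ = 3/2-(α-σ) by ring, show 3-α- -σ = 3-(α-σ) by ring]
  generalize Gamma (σ+3) = w1 at *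
  generalize Gamma (σ+3/2) = w2 at *
  generalize Gamma (3-α) = w3 at *
  generalize Gamma (3/2-α) = w4 at *
  generalize Gamma (3-(α-σ)) = w5 at *
  generalize Gamma (3/2-(α-σ)) = w6 at *
  field_simp
  norm_num

lemma main_one (σ α : ℝ) (hσ : 0 < σ) (hα : α < 3/2) :
    HasSum (fun m : ℕ => Kker σ (m+1) 1 * Rr α (m+1)) (Rr (α-σ) 1) := by
  have h := (aa_summable α (-σ) hα (by linarith) (by linarith)).hasSum
  have e : (∑' k, aa α k * aa (-σ) k) = VV α (-σ) := AA_eq α (-σ) hα (by linarith)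
  rw [e] at h
  have h2 := h.mul_left (4 * 4^σ * Gamma (σ+3/2) / (√π * Gamma (σ+3)) * R1 α)
  rw [const_eq σ α hσ hα] at h2
  have e3 := Rr_eq (α-σ) (by linarith) 0
  rw [aa_zero, mul_one, zero_add] at e3
  rw [e3]
  refine h2.congr_fun ?_
  intro m
  rw [Kker_one σ hσ, Rr_eq α hα]; ring

lemma main_all (α : ℝ) (hα : α < 3/2) (n : ℕ) : ∀ σ : ℝ, 0 < σ →
    HasSum (fun m : ℕ => Kker σ (m+1) n * Rr α (m+1)) (Rr (α-σ) n) := by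
  induction n using Nat.twoStepInduction with
  | zero => intro σ _; simpa [Kker_zero, Rr] using hasSum_zero
  | one => intro σ hσ; exact main_one σ α hσ hα
  | more n h0 h1 =>
    intro σ hσ
    have h := (((h1 σ hσ).mul_left 2).sub (h0 σ hσ)).sub (h1 (σ+1) (by linarith))
    have e := Rr_lap (α-σ) (by linarith) n
    rw [show α-σ-1 = α-(σ+1) by ring] at e
    have e2 : Rr (α-σ) (n+2) = 2 * Rr (α-σ) (n+1) - Rr (α-σ) n - Rr (α-(σ+1)) (n+1) := by linarith
    rw [e2]
    refine h.congr_fun ?_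
    intro m
    rw [Kker_rec σ hσ]; ring

lemma Riesz_eq (β : ℝ) (hβ : 0 < β) (k : ℕ) : Riesz β (k+1) = Rr β (k+1) := by
  have g := (Gamma_pos_of_pos hβ).ne'
  unfold Riesz Rr
  rw [show ((k+1:ℕ):ℝ)+β-1 = β + k by push_cast; ring, Gamma_pch hβ, Nat.add_sub_cancel]
  field_simp

lemma Riesz_pos (β : ℝ) (hβ : 0 < β) (h : β < 3/2) (n : ℕ) (hn : 1 ≤ n) : 0 < Riesz β n := by
  have hn' : (1:ℝ) ≤ n := by exact_mod_cast hn
  have g1 := Gamma_pos_of_pos hβ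
  have g2 := Gamma_pos_of_pos (s := 3/2-β) (by linarith)
  have g3 := Gamma_pos_of_pos (s := n+β-1) (by linarith)
  have g4 := Gamma_pos_of_pos (s := n-β+2) (by linarith)
  unfold Riesz
  positivity

end

/-- `(-Δ_ℕ)^σ I_α = I_{α-σ}`; in particular `I_α` is a strictly positive
supersolution of `(-Δ_ℕ)^σ u = 0` on `ℕ`. -/
theorem stmt_6 (σ α : ℝ) (hσ0 : 0 < σ) (hσ3 : σ < 3/2)
    (hα0 : 0 < α) (hα3 : α < 3/2) (hα1 : σ < α) (hα2 : α < 1 + σ)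
    (n : ℕ) (hn : 1 ≤ n) :
    Summable (fun m : ℕ => |Kker σ (m + 1) n * Riesz α (m + 1)|) ∧
    (∑' m : ℕ, Kker σ (m + 1) n * Riesz α (m + 1)) = Riesz (α - σ) n ∧
    0 < Riesz α n ∧ 0 < Riesz (α - σ) n := by
  have h := main_all α hα3 n σ hσ0
  have e : (fun m : ℕ => Kker σ (m + 1) n * Riesz α (m + 1)) =
      fun m : ℕ => Kker σ (m+1) n * Rr α (m+1) := by
    funext m; rw [Riesz_eq α hα0]
  have e2 : Rr (α-σ) n = Riesz (α-σ) n := by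
    obtain ⟨k, rfl⟩ := Nat.exists_eq_add_of_le' hn
    rw [Riesz_eq _ (by linarith)]
  rw [← e, e2] at h
  exact ⟨h.summable.abs, h.tsum_eq, Riesz_pos α hα0 hα3 n hn,
    Riesz_pos (α-σ) (by linarith) (by linarith) n hn⟩
end

section
/- Let α ∈ (0,3/2) and n ≥ 1 an integer. Then √(2/π)·∫_{−1}^{1} U_{n−1}(x)·2^{−α}·(1−x)^{−α}·√(1−x²) dx = (4n/(4^α·√2))·Γ(3/2−α)·Γ(n+α−1)/(Γ(α)·Γ(n−α+2)), where U_{n−1} is the Chebyshev polynomial of the second kind of degree n−1; moreover this value is strictly positive. -/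
open Real Filter

noncomputable def wfun (α x : ℝ) : ℝ := (1 - x) ^ (-α) * Real.sqrt (1 - x ^ 2)

lemma wfun_eq (α x : ℝ) (hx : x ∈ Set.Ioo (-1 : ℝ) 1) :
    wfun α x = Real.sqrt (1 + x) * (1 - x) ^ (1/2 - α) := by
  obtain ⟨h1, h2⟩ := hx
  have h : (0:ℝ) < 1 - x := by linarith
  unfold wfun
  rw [show 1 - x ^ 2 = (1 - x) * (1 + x) by ring, Real.sqrt_mul h.le, sub_eq_add_neg (1/2 : ℝ) α,
    Real.rpow_add h, ← Real.sqrt_eq_rpow]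
  ring

lemma wfun_shift (α x : ℝ) (hx : x ≤ 1) : (1 - x) * wfun α x = wfun (α - 1) x := by
  unfold wfun
  rcases hx.eq_or_lt with rfl | hx
  · simp
  · have h : (0:ℝ) < 1 - x := by linarith
    rw [show -(α - 1) = 1 + -α by ring, Real.rpow_add h, Real.rpow_one]
    ring

lemma wfun_int (α : ℝ) (hα : α < 3/2) :
    IntervalIntegrable (wfun α) MeasureTheory.volume (-1) 1 := by
  have h1 : IntervalIntegrable (fun x : ℝ => x ^ (1/2 - α)) MeasureTheory.volume 2 0 :=
    intervalIntegral.intervalIntegrable_rpow' (by linarith)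
  have h2 := h1.comp_sub_left 1
  norm_num at h2
  have h3 := h2.continuousOn_mul (g := fun x => Real.sqrt (1 + x)) (by fun_prop)
  refine IntervalIntegrable.congr_uIoo h3 (fun x hx => ?_)
  rw [Set.uIoo_of_le (by norm_num)] at hx
  rw [wfun_eq α x hx]

lemma real_beta (u v : ℝ) (hu : 0 < u) (hv : 0 < v) :
    ∫ x in (0:ℝ)..1, x ^ (u - 1) * (1 - x) ^ (v - 1) =
      Real.Gamma u * Real.Gamma v / Real.Gamma (u + v) := by
  have h := ProbabilityTheory.beta_eq_betaIntegralReal u v hu hv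
  rw [ProbabilityTheory.beta] at h
  rw [h, Complex.betaIntegral]
  have : ∫ x in (0:ℝ)..1, (x : ℂ) ^ ((u : ℂ) - 1) * (1 - (x : ℂ)) ^ ((v : ℂ) - 1) =
      ((∫ x in (0:ℝ)..1, x ^ (u - 1) * (1 - x) ^ (v - 1) : ℝ) : ℂ) := by
    rw [← intervalIntegral.integral_ofReal]
    refine intervalIntegral.integral_congr (fun x hx => ?_)
    rw [Set.uIcc_of_le (by norm_num)] at hx
    push_cast
    rw [Complex.ofReal_cpow hx.1, Complex.ofReal_cpow (by linarith [hx.2])]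
    push_cast
    rfl
  rw [this, Complex.ofReal_re]

lemma wfun_base (α : ℝ) (hα : α < 3/2) :
    ∫ x in (-1 : ℝ)..1, wfun α x =
      2 ^ (2 - α) * (Real.sqrt π / 2) * Real.Gamma (3/2 - α) / Real.Gamma (3 - α) := by
  have h := intervalIntegral.smul_integral_comp_sub_mul (a := 0) (b := 1) (wfun α) 2 1
  rw [show (1:ℝ) - 2 * 1 = -1 by norm_num, show (1:ℝ) - 2 * 0 = 1 by norm_num, smul_eq_mul] at h
  rw [← h]
  have h2 : ∫ x in (0:ℝ)..1, wfun α (1 - 2 * x) =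
      ∫ x in (0:ℝ)..1, 2 ^ (1 - α) * (x ^ ((3/2 - α) - 1) * (1 - x) ^ ((3/2 : ℝ) - 1)) := by
    apply intervalIntegral.integral_congr_Ioo_of_le (by norm_num)
    intro x hx
    obtain ⟨h0, h1⟩ := hx
    simp only
    rw [wfun_eq α _ ⟨by linarith, by linarith⟩, show 1 + (1 - 2 * x) = 2 * (1 - x) by ring,
      show 1 - (1 - 2 * x) = 2 * x by ring, Real.sqrt_mul (by norm_num),
      Real.mul_rpow (by norm_num) h0.le, show (1 - α) = 1/2 + (1/2 - α) by ring,
      Real.rpow_add (by norm_num : (0:ℝ) < 2), Real.sqrt_eq_rpow, Real.sqrt_eq_rpow,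
      show (3/2 - α) - 1 = 1/2 - α by ring, show (3/2 : ℝ) - 1 = 1/2 by norm_num]
    ring
  rw [h2, intervalIntegral.integral_const_mul, real_beta _ _ (by linarith) (by norm_num),
    show 3/2 - α + 3/2 = 3 - α by ring, show (2 - α) = 1 + (1 - α) by ring,
      Real.rpow_add (by norm_num : (0:ℝ) < 2), Real.rpow_one,
      show (3/2 : ℝ) = 1/2 + 1 by norm_num, Real.Gamma_add_one (by norm_num : (1/2:ℝ) ≠ 0),
      Real.Gamma_one_half_eq]
  ring

noncomputable def Jint (k : ℕ) (α : ℝ) : ℝ :=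
  ∫ x in (-1 : ℝ)..1, (Polynomial.Chebyshev.U ℝ (k : ℤ)).eval x * wfun α x

noncomputable def rise (k : ℕ) (α : ℝ) : ℝ := ∏ i ∈ Finset.range k, (α + i)

lemma U_int (k : ℕ) (α : ℝ) (hα : α < 3/2) :
    IntervalIntegrable (fun x => (Polynomial.Chebyshev.U ℝ (k : ℤ)).eval x * wfun α x)
      MeasureTheory.volume (-1) 1 :=
  (wfun_int α hα).continuousOn_mul (Polynomial.continuous _).continuousOn

lemma Jint_zero (α : ℝ) : Jint 0 α = ∫ x in (-1 : ℝ)..1, wfun α x := by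
  simp [Jint]

lemma Jint_one (α : ℝ) (hα : α < 3/2) : Jint 1 α = 2 * Jint 0 α - 2 * Jint 0 (α - 1) := by
  rw [Jint_zero, Jint_zero, ← intervalIntegral.integral_const_mul,
    ← intervalIntegral.integral_const_mul, ← intervalIntegral.integral_sub
      ((wfun_int α hα).const_mul 2) ((wfun_int (α - 1) (by linarith)).const_mul 2)]
  refine intervalIntegral.integral_congr (fun x hx => ?_)
  rw [Set.uIcc_of_le (by norm_num)] at hx
  rw [← wfun_shift α x hx.2]
  simp
  ring

lemma Jint_add_two (k : ℕ) (α : ℝ) (hα : α < 3/2) :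
    Jint (k + 2) α = 2 * Jint (k + 1) α - Jint k α - 2 * Jint (k + 1) (α - 1) := by
  have a1 := (U_int (k + 1) α hα).const_mul 2
  have a2 := U_int k α hα
  have a3 := (U_int (k + 1) (α - 1) (by linarith)).const_mul 2
  unfold Jint
  rw [← intervalIntegral.integral_const_mul,
    ← intervalIntegral.integral_const_mul, ← intervalIntegral.integral_sub a1 a2,
    ← intervalIntegral.integral_sub (a1.sub a2) a3]
  refine intervalIntegral.integral_congr (fun x hx => ?_)
  rw [Set.uIcc_of_le (by norm_num)] at hx
  rw [← wfun_shift α x hx.2]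
  push_cast
  rw [Polynomial.Chebyshev.U_add_two]
  simp
  ring

lemma rise_succ (k : ℕ) (α : ℝ) : rise (k + 1) α = rise k α * (α + k) := by
  simp [rise, Finset.prod_range_succ]

lemma rise_shift (k : ℕ) (α : ℝ) : rise (k + 1) (α - 1) = (α - 1) * rise k α := by
  simp only [rise, Finset.prod_range_succ']
  push_cast
  rw [mul_comm]
  congr 1
  · ring
  · exact Finset.prod_congr rfl (fun i _ => by ring)

lemma rise_Gamma (k : ℕ) (α : ℝ) (h : 0 < α) : Real.Gamma (k + α) = rise k α * Real.Gamma α := by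
  induction k with
  | zero => simp [rise]
  | succ k ih =>
    have : (0:ℝ) < k + α := by positivity
    push_cast
    rw [rise_succ, show (k:ℝ) + 1 + α = (k + α) + 1 by ring, Real.Gamma_add_one this.ne', ih]
    ring

lemma Gam_step (s : ℝ) (h : 0 < s) : Real.Gamma (s + 1) = s * Real.Gamma s :=
  Real.Gamma_add_one h.ne'

lemma Jint_eq (k : ℕ) : ∀ α : ℝ, α < 3/2 → Jint k α =
    2 ^ (2 - α) * (Real.sqrt π / 2) * (k + 1) * Real.Gamma (3/2 - α) * rise k α /
      Real.Gamma (k + 3 - α) := by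
  have pw : ∀ α : ℝ, (2:ℝ) ^ (2 - (α - 1)) = 2 * 2 ^ (2 - α) := fun α => by
    rw [show 2 - (α - 1) = 1 + (2 - α) by ring, Real.rpow_add (by norm_num : (0:ℝ) < 2),
      Real.rpow_one]
  have gg : ∀ α : ℝ, α < 3/2 → Real.Gamma (3/2 - (α - 1)) = (3/2 - α) * Real.Gamma (3/2 - α) :=
    fun α hα => by
      rw [show 3/2 - (α - 1) = (3/2 - α) + 1 by ring, Gam_step _ (by linarith)]
  induction k using Nat.twoStepInduction with
  | zero => intro α hα; rw [Jint_zero, wfun_base α hα]; simp [rise]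
  | one =>
    intro α hα
    rw [Jint_one α hα, Jint_zero, Jint_zero, wfun_base α hα, wfun_base _ (by linarith), pw, gg α hα]
    have h0 : 0 < 3 - α := by linarith
    have hG := (Real.Gamma_pos_of_pos h0).ne'
    rw [show 3 - (α - 1) = (3 - α) + 1 by ring,
      show ((1:ℕ):ℝ) + 3 - α = (3 - α) + 1 by push_cast; ring, Gam_step _ h0]
    simp only [rise, Finset.prod_range_one]
    push_cast
    have h0' := h0.ne'
    field_simp
    ring
  | more k ih1 ih2 =>
    intro α hα
    rw [Jint_add_two k α hα, ih1 α hα, ih2 α hα, ih2 (α - 1) (by linarith), pw, gg α hα,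
      rise_shift, rise_succ (k + 1), rise_succ k]
    have hk : (0:ℝ) ≤ k := Nat.cast_nonneg k
    have h0 : 0 < k + 3 - α := by linarith
    have h1 : 0 < k + 3 - α + 1 := by linarith
    have hG := (Real.Gamma_pos_of_pos h0).ne'
    push_cast
    rw [show (k:ℝ) + 1 + 3 - (α - 1) = (k + 3 - α + 1) + 1 by ring,
      show (k:ℝ) + 2 + 3 - α = (k + 3 - α + 1) + 1 by ring,
      show (k:ℝ) + 1 + 3 - α = (k + 3 - α) + 1 by ring, Gam_step _ h1, Gam_step _ h0]
    generalize Real.Gamma (k + 3 - α) = G at *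
    generalize Real.Gamma (3/2 - α) = A at *
    generalize (2:ℝ) ^ (2 - α) = B at *
    have h0' := h0.ne'
    have h1' := h1.ne'
    field_simp
    ring

/-- Explicit evaluation of the Riesz potential integral via Chebyshev polynomials. -/
theorem stmt_7 (α : ℝ) (hα0 : 0 < α) (hα3 : α < 3/2) (n : ℕ) (hn : 1 ≤ n) :
    Real.sqrt (2 / π) *
        (∫ x in (-1 : ℝ)..1,
          (Polynomial.Chebyshev.U ℝ ((n : ℤ) - 1)).eval x * ((2 : ℝ) ^ (-α) * (1 - x) ^ (-α)) *
            Real.sqrt (1 - x ^ 2)) =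
      (4 * n / (4 ^ α * Real.sqrt 2)) * Real.Gamma (3/2 - α) * Real.Gamma (n + α - 1) /
        (Real.Gamma α * Real.Gamma (n - α + 2)) ∧
    0 < (4 * n / (4 ^ α * Real.sqrt 2)) * Real.Gamma (3/2 - α) * Real.Gamma (n + α - 1) /
        (Real.Gamma α * Real.Gamma (n - α + 2)) := by
  have hn1 : (1:ℝ) ≤ n := by exact_mod_cast hn
  have p1 : 0 < Real.Gamma (3/2 - α) := Real.Gamma_pos_of_pos (by linarith)
  have p2 : 0 < Real.Gamma (n + α - 1) := Real.Gamma_pos_of_pos (by linarith)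
  have p3 : 0 < Real.Gamma α := Real.Gamma_pos_of_pos hα0
  have p4 : 0 < Real.Gamma (n - α + 2) := Real.Gamma_pos_of_pos (by linarith)
  have p5 : (0:ℝ) < n := by linarith
  refine ⟨?_, by positivity⟩
  obtain ⟨k, rfl⟩ : ∃ k, n = k + 1 := ⟨n - 1, by omega⟩
  have hJ : (∫ x in (-1 : ℝ)..1,
          (Polynomial.Chebyshev.U ℝ (((k + 1 : ℕ) : ℤ) - 1)).eval x *
            ((2 : ℝ) ^ (-α) * (1 - x) ^ (-α)) * Real.sqrt (1 - x ^ 2)) = 2 ^ (-α) * Jint k α := by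
    rw [Jint, ← intervalIntegral.integral_const_mul]
    congr 1
    funext x
    rw [show (((k + 1 : ℕ) : ℤ) - 1) = k by push_cast; ring, wfun]
    ring
  rw [hJ, Jint_eq k α hα3]
  push_cast at p4 ⊢
  have e4 : (4:ℝ) ^ α = 2 ^ α * 2 ^ α := by
    rw [← Real.mul_rpow (by norm_num) (by norm_num)]; norm_num
  have e2 : (2:ℝ) ^ (2 - α) = 4 / 2 ^ α := by
    rw [Real.rpow_sub (by norm_num)]; norm_num
  have q : (0:ℝ) < 2 ^ α := by positivity
  have hs : 0 < Real.sqrt π := Real.sqrt_pos.2 Real.pi_pos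
  have h2 : Real.sqrt 2 * Real.sqrt 2 = 2 := Real.mul_self_sqrt (by norm_num)
  have h2' : 0 < Real.sqrt 2 := by positivity
  rw [show (k:ℝ) + 1 + α - 1 = k + α by ring, rise_Gamma k α hα0, e4, e2,
    Real.rpow_neg (by norm_num), Real.sqrt_div (by norm_num),
    show (k:ℝ) + 3 - α = k + 1 - α + 2 by ring]
  have p4' := p4.ne'
  field_simp
  try rw [pow_two, h2]
  try ring
end
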